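/- If C is a virtually-ℤ subgroup of a one-relator group with torsion, then C is either infinite cyclic or infinite dihedral. -/

import Mathlib

/-- A group is *virtually-ℤ* if it has a finite-index subgroup isomorphic to `ℤ`. -/
def VirtuallyZ (G : Type*) [Group G] : Prop :=
  ∃ H : Subgroup G, H.FiniteIndex ∧ Nonempty (H ≃* Multiplicative ℤ)

/-- A subgroup `M` of `G` is *malnormal* if `g M g⁻¹ ∩ M ≠ 1` implies `g ∈ M`. -/
def Subgroup.IsMalnormal {G : Type*} [Group G] (M : Subgroup G) : Prop :=
  ∀ g : G, (∃ x : G, x ≠ 1 ∧ x ∈ M ∧ g * x * g⁻¹ ∈ M) → g ∈ M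

/-- A group is a *free product of cyclic groups* if it is isomorphic to the free product
(`Monoid.CoprodI`) of a family of cyclic groups; every cyclic group is isomorphic to
`Multiplicative (ZMod m)` for some `m : ℕ` (with `m = 0` giving the infinite cyclic group). -/
def IsFreeProductOfCyclics (G : Type*) [Group G] : Prop :=
  ∃ (ι : Type) (m : ι → ℕ),
    Nonempty (G ≃* Monoid.CoprodI fun i => Multiplicative (ZMod (m i)))

/-- A group is *freely decomposable* if it is isomorphic to a free product of two
nontrivial groups. -/
def FreelyDecomposable (G : Type*) [Group G] : Prop :=
  ∃ (H K : Type) (gH : Group H) (gK : Group K),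
    Nontrivial H ∧ Nontrivial K ∧
      Nonempty (G ≃* (letI := gH; letI := gK; Monoid.Coprod H K))

/-- A group is *freely indecomposable* if it is not isomorphic to a free product of two
nontrivial groups. -/
def FreelyIndecomposable (G : Type*) [Group G] : Prop := ¬ FreelyDecomposable G

/-!
A virtually-`ℤ` group in which nontrivial torsion elements have torsion centralizers has an infinite
cyclic normal subgroup of finite index, whose centralizer is torsion-free with center of finite
index, hence infinite cyclic, and has index at most two; the group is then `ℤ` or infinite dihedral.
So it is enough that nontrivial torsion elements of one-relator groups have torsion centralizers.
This is proved by Magnus' induction on the length of the relator. A relator `r` with exponent sum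
zero in a letter `t` is a word in the conjugates `tⁱ x t⁻ⁱ`, shorter than `r`, and `⟨X; r⟩` embeds
in an HNN extension, with stable letter `t`, of the one-relator group of that word. The associated
subgroups are free by the Freiheitssatz, so torsion and its centralizers are conjugate into the
base. If no exponent sum is zero, adjoining a root by `b ↦ b a⁻ᵅ`, `a ↦ aᵝ` makes one of them
vanish. The Freiheitssatz is proved by the same induction.
-/

/-! ### Groups in which torsion elements have torsion centralizers -/

/-- Every element commuting with a nontrivial torsion element is itself a torsion element. This is
the only property of one-relator groups that the classification of their virtually-`ℤ` subgroups
needs. -/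
def HasTorsionCentralizers (G : Type*) [Group G] : Prop :=
  ∀ g h : G, IsOfFinOrder g → g ≠ 1 → Commute g h → IsOfFinOrder h

namespace HasTorsionCentralizers

variable {G H : Type*} [Group G] [Group H]

theorem of_injective (hH : HasTorsionCentralizers H) {f : G →* H} (hf : Function.Injective f) :
    HasTorsionCentralizers G := fun g h hg hg1 hgh =>
  hf.isOfFinOrder_iff.1 <|
    hH (f g) (f h) (f.isOfFinOrder hg) ((map_ne_one_iff f hf).2 hg1) (hgh.map f)

theorem of_torsionFree (hG : ∀ g : G, IsOfFinOrder g → g = 1) : HasTorsionCentralizers G :=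
  fun g _ hg hg1 _ => absurd (hG g hg) hg1

theorem of_isTorsion (hG : IsMulTorsion G) : HasTorsionCentralizers G := fun _ h _ _ _ => hG h

end HasTorsionCentralizers

/-! ### Virtually infinite cyclic groups -/

section VirtuallyCyclic

open Subgroup

variable {G : Type*} [Group G]

theorem VirtuallyZ.exists_normal_zpowers (hG : VirtuallyZ G) :
    ∃ z : G, ¬IsOfFinOrder z ∧ (zpowers z).Normal ∧ (zpowers z).FiniteIndex := by
  obtain ⟨H, hH, ⟨e⟩⟩ := hG
  have hcyc : IsCyclic H.normalCore := isCyclic_of_injective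
    (e.toMonoidHom.comp (inclusion H.normalCore_le)) (e.injective.comp (inclusion_injective _))
  obtain ⟨z, hz⟩ := H.normalCore.isCyclic_iff_exists_zpowers_eq_top.1 hcyc
  refine ⟨z, fun hfin => ?_, hz ▸ H.normalCore_normal, hz ▸ inferInstance⟩
  let x : H := e.symm (Multiplicative.ofAdd 1)
  obtain ⟨n, hn, -, hxn⟩ :=
    exists_pow_mem_of_index_ne_zero (H := H.normalCore) FiniteIndex.index_ne_zero (x : G)
  have hxn_fin : IsOfFinOrder ((x : G) ^ n) := by
    rw [← hz] at hxn
    obtain ⟨i, hi⟩ := mem_zpowers_iff.1 hxn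
    exact hi ▸ hfin.zpow
  have hx : IsOfFinOrder x := Submonoid.isOfFinOrder_coe.1 (hxn_fin.of_pow hn.ne')
  have hone : IsOfFinOrder (Multiplicative.ofAdd (1 : ℤ)) := by
    simpa [x] using e.toMonoidHom.isOfFinOrder hx
  obtain ⟨m, hm, h⟩ := isOfFinOrder_iff_pow_eq_one.1 hone
  rw [← ofAdd_nsmul, ofAdd_eq_one] at h
  rw [nsmul_one, Nat.cast_eq_zero] at h
  exact hm.ne' h

-- The transfer to the central subgroup is `x ↦ x ^ index`, which is injective without torsion.
theorem isCyclic_of_zpowers_le_center (hG : ∀ x : G, IsOfFinOrder x → x = 1) {z : G}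
    (hz : zpowers z ≤ center G) [(zpowers z).FiniteIndex] : IsCyclic G := by
  let : CommGroup (zpowers z) := IsCyclic.commGroup
  have hconj (x : G) (k : ℕ) (y : G) (h : y⁻¹ * x ^ k * y ∈ zpowers z) :
      y⁻¹ * x ^ k * y = x ^ k := by
    have hcomm := mem_center_iff.1 (hz h) y
    rw [← mul_assoc, ← mul_assoc, mul_inv_cancel, one_mul] at hcomm
    exact (mul_right_cancel hcomm).symm
  refine isCyclic_of_injective (MonoidHom.transfer (MonoidHom.id (zpowers z)))
    ((injective_iff_map_eq_one _).2 fun x hx => hG x ?_)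
  rw [MonoidHom.transfer_eq_pow _ x (hconj x)] at hx
  exact isOfFinOrder_iff_pow_eq_one.2
    ⟨_, Nat.pos_of_ne_zero FiniteIndex.index_ne_zero, congrArg Subtype.val hx⟩

theorem HasTorsionCentralizers.exists_normal_self_centralizing (hT : HasTorsionCentralizers G)
    (hG : VirtuallyZ G) : ∃ d : G, ¬IsOfFinOrder d ∧ (zpowers d).Normal ∧
      ∀ x : G, Commute x d → x ∈ zpowers d := by
  obtain ⟨z, hz, hnormal, hindex⟩ := hG.exists_normal_zpowers
  have hcent (x : G) : x ∈ centralizer (zpowers z : Set G) ↔ Commute x z := by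
    rw [zpowers_eq_closure, centralizer_closure, mem_centralizer_singleton_iff]
    rfl
  let D := centralizer (zpowers z : Set G)
  have hzD : z ∈ D := (hcent z).2 (Commute.refl z)
  have hD_torsionFree (x : D) (hx : IsOfFinOrder x) : x = 1 := by
    by_contra hx1
    exact hz (hT x z (Submonoid.isOfFinOrder_coe.2 hx) (mt (OneMemClass.coe_eq_one).1 hx1)
      ((hcent x).1 x.2))
  have hz_sub : zpowers (⟨z, hzD⟩ : D) = (zpowers z).subgroupOf D := by
    ext x
    simp only [mem_zpowers_iff, mem_subgroupOf, Subtype.ext_iff, SubgroupClass.coe_zpow]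
  have : (zpowers (⟨z, hzD⟩ : D)).FiniteIndex := hz_sub ▸ inferInstance
  have hz_center : (⟨z, hzD⟩ : D) ∈ center D :=
    mem_center_iff.2 fun x => Subtype.ext ((hcent x).1 x.2).eq
  have hD_cyclic : IsCyclic D :=
    isCyclic_of_zpowers_le_center hD_torsionFree (zpowers_le.2 hz_center)
  obtain ⟨d, hd⟩ := D.isCyclic_iff_exists_zpowers_eq_top.1 hD_cyclic
  obtain ⟨q, rfl⟩ := mem_zpowers_iff.1 (hd ▸ hzD)
  refine ⟨d, fun h => hz h.zpow, hd ▸ inferInstance, fun x hx => ?_⟩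
  exact hd ▸ (hcent x).2 (hx.zpow_right q)

theorem semiconjBy_self_or_inv_of_normal_zpowers {d : G} (hd : ¬IsOfFinOrder d)
    [hnormal : (zpowers d).Normal] (x : G) : SemiconjBy x d d ∨ SemiconjBy x d d⁻¹ := by
  obtain ⟨i, hi⟩ := mem_zpowers_iff.1 (hnormal.conj_mem d (mem_zpowers d) x)
  obtain ⟨j, hj⟩ := mem_zpowers_iff.1 (hnormal.conj_mem d (mem_zpowers d) x⁻¹)
  have hij : i * j = 1 := injective_zpow_iff_not_isOfFinOrder.2 hd <| by
    calc d ^ (i * j) = (x * d * x⁻¹) ^ j := by rw [zpow_mul, hi]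
      _ = x * d ^ j * x⁻¹ := conj_zpow
      _ = d ^ (1 : ℤ) := by rw [hj]; group
  have hx : SemiconjBy x d (d ^ i) := by rw [hi]; simp [SemiconjBy]
  rcases Int.eq_one_or_neg_one_of_mul_eq_one hij with rfl | rfl
  · exact .inl (by rwa [zpow_one] at hx)
  · exact .inr (by rwa [zpow_neg_one] at hx)

/-- The homomorphism from the infinite dihedral group given by an involution `t` inverting `d`. -/
def infiniteDihedralLift {d t : G} (ht : t * t = 1) (htd : SemiconjBy t d d⁻¹) :
    DihedralGroup 0 →* G where
  toFun
    | .r i => d ^ (show ℤ from i)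
    | .sr i => t * d ^ (show ℤ from i)
  map_one' := zpow_zero d
  map_mul' := by
    have hmove (i : ℤ) : d ^ i * t = t * d ^ (-i) := by
      rw [zpow_neg, ← inv_zpow, (htd.inv_right.zpow_right i).eq, inv_inv]
    rintro (i | i) (j | j)
    · exact zpow_add d _ _
    · change t * d ^ (_ - _ : ℤ) = d ^ _ * (t * d ^ _)
      rw [← mul_assoc, hmove, mul_assoc, ← zpow_add, neg_add_eq_sub]
    · change t * d ^ (_ + _ : ℤ) = t * d ^ _ * d ^ _
      rw [mul_assoc, ← zpow_add]
    · change d ^ (_ - _ : ℤ) = t * d ^ _ * (t * d ^ _)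
      rw [← mul_assoc, mul_assoc t, hmove, ← mul_assoc, ht, one_mul, ← zpow_add, neg_add_eq_sub]

theorem infiniteDihedralLift_bijective {d t : G} (ht : t * t = 1) (htd : SemiconjBy t d d⁻¹)
    (hd : ¬IsOfFinOrder d) (ht_mem : t ∉ zpowers d)
    (hcover : ∀ x, x ∉ zpowers d → t * x ∈ zpowers d) :
    Function.Bijective (infiniteDihedralLift ht htd) := by
  refine ⟨(injective_iff_map_eq_one _).2 ?_, fun x => ?_⟩
  · rintro (i | i) hi
    · exact congrArg DihedralGroup.r (injective_zpow_iff_not_isOfFinOrder.2 hd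
        (hi.trans (zpow_zero d).symm))
    · refine absurd ?_ ht_mem
      rw [eq_inv_of_mul_eq_one_left hi]
      exact inv_mem (zpow_mem (mem_zpowers d) _)
  · by_cases hx : x ∈ zpowers d
    · obtain ⟨i, hi⟩ := mem_zpowers_iff.1 hx
      exact ⟨.r i, hi⟩
    · obtain ⟨i, hi⟩ := mem_zpowers_iff.1 (hcover x hx)
      refine ⟨.sr i, ?_⟩
      change t * d ^ i = x
      rw [hi, ← mul_assoc, ht, one_mul]

theorem nonempty_mulEquiv_int_or_infiniteDihedral {d : G} (hd : ¬IsOfFinOrder d)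
    [(zpowers d).Normal] (hself : ∀ x, Commute x d → x ∈ zpowers d) :
    Nonempty (G ≃* Multiplicative ℤ) ∨ Nonempty (G ≃* DihedralGroup 0) := by
  have hinvert {x : G} (hx : x ∉ zpowers d) : SemiconjBy x d d⁻¹ :=
    (semiconjBy_self_or_inv_of_normal_zpowers hd x).resolve_left fun h => hx (hself x h)
  have hmul {x y : G} (hx : x ∉ zpowers d) (hy : y ∉ zpowers d) : x * y ∈ zpowers d :=
    hself _ (inv_inv d ▸ (hinvert hx).inv_right.mul_left (hinvert hy) :)
  by_cases htop : ∀ x, x ∈ zpowers d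
  · have hbij : Function.Bijective (zpowersHom G d) :=
      ⟨injective_zpow_iff_not_isOfFinOrder.2 hd, htop⟩
    exact .inl ⟨(MulEquiv.ofBijective _ hbij).symm⟩
  · obtain ⟨t, ht⟩ := not_forall.1 htop
    obtain ⟨m, hm⟩ := mem_zpowers_iff.1 (hmul ht ht)
    -- `t` commutes with its square `d ^ m`, yet conjugates it to `d ^ (-m)`.
    have hm0 : m = 0 := by
      have h : SemiconjBy t (d ^ m) (d ^ m) := hm ▸ (Commute.refl t).mul_right (Commute.refl t)
      have h' := injective_zpow_iff_not_isOfFinOrder.2 hd <|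
        (mul_right_cancel (h.eq.symm.trans ((hinvert ht).zpow_right m).eq)).trans (inv_zpow' d m)
      lia
    rw [hm0, zpow_zero] at hm
    exact .inr ⟨(MulEquiv.ofBijective _ (infiniteDihedralLift_bijective hm.symm (hinvert ht) hd ht
      fun x hx => hmul ht hx)).symm⟩

theorem HasTorsionCentralizers.mulEquiv_int_or_infiniteDihedral (hT : HasTorsionCentralizers G)
    (hG : VirtuallyZ G) : Nonempty (G ≃* Multiplicative ℤ) ∨ Nonempty (G ≃* DihedralGroup 0) := by
  obtain ⟨d, hd, hnormal, hself⟩ := hT.exists_normal_self_centralizing hG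
  exact nonempty_mulEquiv_int_or_infiniteDihedral hd hself

end VirtuallyCyclic

/-! ### Torsion in HNN extensions -/

section HNN

open HNNExtension

variable {G : Type*} [Group G] {A B : Subgroup G} {φ : A ≃* B}

variable (φ) in
/-- The product `t ^ u₁ * g₁ * ⋯ * t ^ uₙ * gₙ` spelled by a list of pairs `(uᵢ, gᵢ)`. -/
def hnnProd (l : List (ℤˣ × G)) : HNNExtension G A B φ :=
  (l.map fun x => t ^ (x.1 : ℤ) * of x.2).prod

variable (A B) in
/-- Britton-reducedness of a word `t ^ u₁ * g₁ * ⋯ * t ^ uₙ * gₙ`: there is no pinch, that is, no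
subword `t * a * t⁻¹` with `a ∈ A` or `t⁻¹ * b * t` with `b ∈ B`. -/
def HNNReduced (l : List (ℤˣ × G)) : Prop :=
  l.IsChain fun x y => x.2 ∈ toSubgroup A B x.1 → x.1 = y.1

theorem hnnProd_append (l m : List (ℤˣ × G)) : hnnProd φ (l ++ m) = hnnProd φ l * hnnProd φ m := by
  simp only [hnnProd, List.map_append, List.prod_append]

theorem hnnProd_singleton (x : ℤˣ × G) : hnnProd φ [x] = t ^ (x.1 : ℤ) * of x.2 := by
  simp only [hnnProd, List.map_cons, List.map_nil, List.prod_singleton]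

theorem hnnProd_flatten_replicate (l : List (ℤˣ × G)) (n : ℕ) :
    hnnProd φ (List.replicate n l).flatten = hnnProd φ l ^ n := by
  induction n with
  | zero => simp only [hnnProd, List.replicate_zero, List.flatten_nil, List.map_nil, List.prod_nil,
      pow_zero]
  | succ n ih => rw [List.replicate_succ, List.flatten_cons, hnnProd_append, ih, pow_succ']

theorem hnnReduced_append {l m : List (ℤˣ × G)} :
    HNNReduced A B (l ++ m) ↔ HNNReduced A B l ∧ HNNReduced A B m ∧
      ∀ x ∈ l.getLast?, ∀ y ∈ m.head?, x.2 ∈ toSubgroup A B x.1 → x.1 = y.1 :=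
  List.isChain_append

theorem HNNReduced.change_last {l : List (ℤˣ × G)} {u : ℤˣ} {g : G}
    (h : HNNReduced A B (l ++ [(u, g)])) (g' : G) : HNNReduced A B (l ++ [(u, g')]) := by
  obtain ⟨hl, -, hlast⟩ := hnnReduced_append.1 h
  refine hnnReduced_append.2 ⟨hl, List.isChain_singleton _, fun x hx y hy => ?_⟩
  obtain rfl : (u, g') = y := by simpa using hy
  exact hlast x hx (u, g) rfl

theorem HNNReduced.flatten_replicate {l : List (ℤˣ × G)} (h : HNNReduced A B (l ++ l)) (hl : l ≠ [])
    (n : ℕ) : HNNReduced A B (List.replicate n l).flatten := by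
  obtain ⟨hred, -, hjoin⟩ := hnnReduced_append.1 h
  refine (List.isChain_flatten fun hmem => hl (List.eq_of_mem_replicate hmem).symm).2
    ⟨fun m hm => List.eq_of_mem_replicate hm ▸ hred, List.isChain_replicate_of_rel n hjoin⟩

variable (φ) in
theorem exists_hnnReduced_eq (x : HNNExtension G A B φ) :
    ∃ (g : G) (l : List (ℤˣ × G)), HNNReduced A B l ∧ of g * hnnProd φ l = x := by
  obtain ⟨d⟩ := NormalWord.TransversalPair.nonempty G A B
  let w := NormalWord.equiv φ d x
  exact ⟨w.head, w.toList, w.chain, (NormalWord.equiv φ d).left_inv x⟩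

theorem HNNReduced.not_isOfFinOrder_hnnProd {l : List (ℤˣ × G)} (h : HNNReduced A B (l ++ l))
    (hl : l ≠ []) : ¬IsOfFinOrder (hnnProd φ l) := fun hfin => by
  obtain ⟨n, hn, hpow⟩ := isOfFinOrder_iff_pow_eq_one.1 hfin
  let w : NormalWord.ReducedWord G A B := ⟨1, _, h.flatten_replicate hl n⟩
  have hw : w.prod φ = 1 := by
    change of 1 * hnnProd φ (List.replicate n l).flatten = 1
    rw [hnnProd_flatten_replicate, hpow, map_one, one_mul]
  have hnil : (List.replicate n l).flatten = [] :=
    ReducedWord.toList_eq_nil_of_mem_of_range φ w (hw ▸ one_mem _)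
  exact hl (List.flatten_eq_nil_iff.1 hnil l (List.mem_replicate.2 ⟨hn.ne', rfl⟩))

variable (φ) in
theorem exists_conj_of_eq_of {u : ℤˣ} {g : G} (hg : g ∈ toSubgroup A B u) :
    ∃ g' : G, (t ^ (u : ℤ) * of g * t ^ (-u : ℤ) : HNNExtension G A B φ) = of g' := by
  rcases Int.units_eq_one_or u with rfl | rfl
  · exact ⟨φ ⟨g, hg⟩, by simp [equiv_eq_conj]⟩
  · exact ⟨φ.symm ⟨g, hg⟩, by simp [equiv_symm_eq_conj]⟩

theorem isConj_of_mul_hnnProd_concat (g y : G) (l : List (ℤˣ × G)) (u : ℤˣ) :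
    IsConj (of g * hnnProd φ (l ++ [(u, y)])) (hnnProd φ (l ++ [(u, y * g)])) := by
  refine isConj_iff.2 ⟨(of g)⁻¹, ?_⟩
  simp only [hnnProd_append, hnnProd_singleton, map_mul]
  group

-- Conjugating the last letter to the front creates a pinch.
theorem HNNReduced.exists_shorter_conj {l : List (ℤˣ × G)} {u : ℤˣ} {y : G}
    (h : HNNReduced A B (l ++ [(u, y)]))
    (hcyc : ¬HNNReduced A B ((l ++ [(u, y)]) ++ (l ++ [(u, y)]))) :
    ∃ (g : G) (m : List (ℤˣ × G)), HNNReduced A B m ∧ m.length < (l ++ [(u, y)]).length ∧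
      IsConj (hnnProd φ (l ++ [(u, y)])) (of g * hnnProd φ m) := by
  obtain ⟨⟨v, g⟩, hhead, hy, hv⟩ :
      ∃ x ∈ (l ++ [(u, y)]).head?, y ∈ toSubgroup A B u ∧ u ≠ x.1 := by
    by_contra! hpinch
    refine hcyc (hnnReduced_append.2 ⟨h, h, fun x hx z hz hmem => ?_⟩)
    obtain rfl : (u, y) = x := by simpa using hx
    exact hpinch z hz hmem
  cases l with
  | nil => exact absurd (by simpa using congrArg Prod.fst (Option.some.inj hhead)) hv
  | cons a m =>
    obtain rfl : a = (v, g) := Option.some.inj hhead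
    have hvu : (v : ℤ) = -u := by
      rcases Int.units_eq_one_or u with rfl | rfl <;>
        rcases Int.units_eq_one_or v with rfl | rfl <;> simp_all
    obtain ⟨g', hg'⟩ := exists_conj_of_eq_of φ hy
    refine ⟨g' * g, m, (hnnReduced_append.1 h).1.tail, by simp,
      isConj_iff.2 ⟨t ^ (u : ℤ) * of y, ?_⟩⟩
    rw [← List.singleton_append, List.append_assoc]
    simp only [hnnProd_append, hnnProd_singleton, hvu, map_mul, ← hg']
    group

variable (φ) in
theorem isConj_of_or_isConj_cyclicallyReduced (x : HNNExtension G A B φ) :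
    (∃ g : G, IsConj x (of g)) ∨
      ∃ l ≠ [], HNNReduced A B (l ++ l) ∧ IsConj x (hnnProd φ l) := by
  obtain ⟨g, l, hl, rfl⟩ := exists_hnnReduced_eq φ x
  induction hn : l.length using Nat.strong_induction_on generalizing g l with
  | _ n ih =>
    rcases List.eq_nil_or_concat' l with rfl | ⟨l', ⟨u, y⟩, rfl⟩
    · exact .inl ⟨g, by rw [hnnProd, List.map_nil, List.prod_nil, mul_one]⟩
    · have hconj := isConj_of_mul_hnnProd_concat (φ := φ) g y l' u
      by_cases hcyc : HNNReduced A B ((l' ++ [(u, y * g)]) ++ (l' ++ [(u, y * g)]))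
      · exact .inr ⟨_, by simp, hcyc, hconj⟩
      · obtain ⟨g', m, hm, hlen, hconj'⟩ :=
          (hl.change_last (y * g)).exists_shorter_conj (φ := φ) hcyc
        exact (ih m.length (by simp_all) g' m hm rfl).imp
          (fun ⟨z, hz⟩ => ⟨z, (hconj.trans hconj').trans hz⟩)
          fun ⟨k, hk, hred, hz⟩ => ⟨k, hk, hred, (hconj.trans hconj').trans hz⟩

theorem exists_isConj_of_of_isOfFinOrder {x : HNNExtension G A B φ} (hx : IsOfFinOrder x) :
    ∃ g : G, IsConj x (of g) :=
  (isConj_of_or_isConj_cyclicallyReduced φ x).resolve_right fun ⟨_, hl, hred, hconj⟩ =>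
    hred.not_isOfFinOrder_hnnProd hl (hconj.isOfFinOrder hx)

-- Otherwise `g * h = h * g` is spelled by two reduced words, whose heads differ by a conjugate of
-- `g⁻¹` lying in an associated subgroup.
theorem mem_range_of_of_commute_torsion (hA : ∀ a ∈ A, IsOfFinOrder a → a = 1)
    (hB : ∀ b ∈ B, IsOfFinOrder b → b = 1) {g : G} (hg : IsOfFinOrder g) (hg1 : g ≠ 1)
    {h : HNNExtension G A B φ} (hgh : Commute (of g) h) : ∃ x : G, of x = h := by
  obtain ⟨x, l, hl, rfl⟩ := exists_hnnReduced_eq φ h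
  rcases List.eq_nil_or_concat' l with rfl | ⟨l', ⟨u, y⟩, rfl⟩
  · exact ⟨x, by rw [hnnProd, List.map_nil, List.prod_nil, mul_one]⟩
  exfalso
  let w₁ : NormalWord.ReducedWord G A B := ⟨g * x, _, hl⟩
  let w₂ : NormalWord.ReducedWord G A B := ⟨x, _, hl.change_last (y * g)⟩
  have hprod : w₁.prod φ = w₂.prod φ := by
    change of (g * x) * hnnProd φ _ = of x * hnnProd φ (l' ++ [(u, y * g)])
    rw [map_mul, mul_assoc, hgh.eq]
    simp only [hnnProd_append, hnnProd_singleton, map_mul, mul_assoc]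
  obtain ⟨v, hv⟩ : ∃ v, v ∈ w₁.toList.head?.map Prod.fst :=
    Option.isSome_iff_exists.1 (by simp [w₁])
  have hmem : (g * x)⁻¹ * x ∈ toSubgroup A B (-v) :=
    (ReducedWord.map_fst_eq_and_of_prod_eq φ hprod).2 v hv
  have hconj : IsConj g⁻¹ ((g * x)⁻¹ * x) := isConj_iff.2 ⟨x⁻¹, by group⟩
  have htriv : (g * x)⁻¹ * x = 1 := by
    have hfin := hconj.isOfFinOrder hg.inv
    rcases Int.units_eq_one_or (-v) with hv' | hv' <;> rw [hv'] at hmem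
    · exact hA _ hmem hfin
    · exact hB _ hmem hfin
  exact hg1 (inv_eq_one.1 (isConj_one_left.1 (htriv ▸ hconj)))

theorem HasTorsionCentralizers.hnnExtension (hG : HasTorsionCentralizers G)
    (hA : ∀ a ∈ A, IsOfFinOrder a → a = 1) (hB : ∀ b ∈ B, IsOfFinOrder b → b = 1) :
    HasTorsionCentralizers (HNNExtension G A B φ) := fun g h hg hg1 hgh => by
  obtain ⟨y, hy⟩ := exists_isConj_of_of_isOfFinOrder hg
  obtain ⟨c, hc⟩ := isConj_iff.1 hy
  have hy_fin : IsOfFinOrder y :=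
    (HNNExtension.of_injective φ).isOfFinOrder_iff.1 (hy.isOfFinOrder hg)
  have hy1 : y ≠ 1 := fun h1 => hg1 (isConj_one_left.1 (by rwa [h1, map_one] at hy))
  have hcomm : Commute (of y) (c * h * c⁻¹) := hc ▸ hgh.map (MulAut.conj c)
  obtain ⟨x, hx⟩ := mem_range_of_of_commute_torsion hA hB hy_fin hy1 hcomm
  have hx_fin : IsOfFinOrder x := hG y x hy_fin hy1 <| by
    rw [← hx] at hcomm
    exact hcomm.of_map (HNNExtension.of_injective φ)
  exact (isConj_iff.2 ⟨c, hx.symm⟩ : IsConj h (of x)).symm.isOfFinOrder (of.isOfFinOrder hx_fin)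

end HNN

/-! ### Magnus subgroups of free groups -/

universe u v

section FreeGroupTools

open Subgroup

variable {X : Type u} {Y : Type v}

/-- The Magnus subgroup of a free group generated by a set of letters. -/
def lettersSubgroup (S : Set X) : Subgroup (FreeGroup X) := closure (FreeGroup.of '' S)

theorem of_mem_lettersSubgroup {S : Set X} {x : X} (hx : x ∈ S) :
    FreeGroup.of x ∈ lettersSubgroup S := subset_closure (Set.mem_image_of_mem _ hx)

theorem lettersSubgroup_le {S : Set X} {H : Subgroup (FreeGroup X)} :
    lettersSubgroup S ≤ H ↔ ∀ x ∈ S, FreeGroup.of x ∈ H := by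
  rw [lettersSubgroup, closure_le, Set.image_subset_iff]
  rfl

theorem lettersSubgroup_mono {S T : Set X} (h : S ⊆ T) : lettersSubgroup S ≤ lettersSubgroup T :=
  closure_mono (Set.image_mono h)

theorem lettersSubgroup_empty : lettersSubgroup (∅ : Set X) = ⊥ := by
  rw [lettersSubgroup, Set.image_empty, Subgroup.closure_empty]

theorem lettersSubgroup_singleton (x : X) : lettersSubgroup {x} = zpowers (FreeGroup.of x) := by
  rw [lettersSubgroup, Set.image_singleton, zpowers_eq_closure]

theorem eqOn_lettersSubgroup {M : Type*} [Monoid M] {f g : FreeGroup X →* M} {S : Set X}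
    (h : ∀ x ∈ S, f (FreeGroup.of x) = g (FreeGroup.of x)) : Set.EqOn f g (lettersSubgroup S) :=
  MonoidHom.eqOn_closure (Set.forall_mem_image.2 h)

theorem mk_mem_lettersSubgroup {S : Set X} {L : List (X × Bool)} (hL : ∀ p ∈ L, p.1 ∈ S) :
    FreeGroup.mk L ∈ lettersSubgroup S := by
  induction L with
  | nil => exact one_mem _
  | cons p L ih =>
    obtain ⟨hp, hL⟩ := List.forall_mem_cons.1 hL
    have hletter : FreeGroup.mk [p] ∈ lettersSubgroup S := by
      obtain ⟨x, _ | _⟩ := p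
      · exact inv_mem (of_mem_lettersSubgroup hp)
      · exact of_mem_lettersSubgroup hp
    exact mul_mem hletter (ih hL)

theorem exists_finite_mem_lettersSubgroup (w : FreeGroup X) :
    ∃ S : Set X, S.Finite ∧ w ∈ lettersSubgroup S := by
  classical
  refine ⟨{x | ∃ p ∈ w.toWord, p.1 = x}, w.toWord.finite_toSet.image Prod.fst, ?_⟩
  rw [← FreeGroup.mk_toWord (x := w)]
  exact mk_mem_lettersSubgroup fun p hp => ⟨p, by rwa [FreeGroup.mk_toWord], rfl⟩

theorem norm_lift_le [DecidableEq X] [DecidableEq Y] {f : X → FreeGroup Y} {c : ℕ}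
    (hf : ∀ x, (f x).norm ≤ c) (w : FreeGroup X) : (FreeGroup.lift f w).norm ≤ c * w.norm := by
  suffices h : ∀ L : List (X × Bool), (FreeGroup.lift f (FreeGroup.mk L)).norm ≤ c * L.length by
    exact (congrArg (fun v => (FreeGroup.lift f v).norm) FreeGroup.mk_toWord).ge.trans (h w.toWord)
  intro L
  induction L with
  | nil => simp only [List.length_nil, mul_zero, nonpos_iff_eq_zero, FreeGroup.lift_mk,
      List.map_nil, List.prod_nil, FreeGroup.norm_one]
  | cons p L ih =>
    have hp : (cond p.2 (f p.1) (f p.1)⁻¹).norm ≤ c := by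
      cases p.2
      · exact (FreeGroup.norm_inv_eq).trans_le (hf p.1)
      · exact hf p.1
    calc _ = (cond p.2 (f p.1) (f p.1)⁻¹ * FreeGroup.lift f (FreeGroup.mk L)).norm := rfl
      _ ≤ _ := FreeGroup.norm_mul_le _ _
      _ ≤ c + c * L.length := add_le_add hp ih
      _ = c * (p :: L).length := by rw [List.length_cons]; ring

open Classical in
/-- The retraction of a free group onto a Magnus subgroup that kills the other letters. -/
noncomputable def letterRetraction (S : Set X) : FreeGroup X →* FreeGroup X :=
  FreeGroup.lift fun x => if x ∈ S then FreeGroup.of x else 1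

theorem letterRetraction_of_mem {S : Set X} {x : X} (hx : x ∈ S) :
    letterRetraction S (FreeGroup.of x) = FreeGroup.of x := by
  rw [letterRetraction, FreeGroup.lift_apply_of, if_pos hx]

theorem letterRetraction_of_notMem {S : Set X} {x : X} (hx : x ∉ S) :
    letterRetraction S (FreeGroup.of x) = 1 := by
  rw [letterRetraction, FreeGroup.lift_apply_of, if_neg hx]

theorem letterRetraction_eq_self {S : Set X} {w : FreeGroup X} (hw : w ∈ lettersSubgroup S) :
    letterRetraction S w = w :=
  eqOn_lettersSubgroup (g := MonoidHom.id _) (fun _ => letterRetraction_of_mem) hw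

theorem letterRetraction_mem_inter (S : Set X) {T : Set X} {w : FreeGroup X}
    (hw : w ∈ lettersSubgroup T) : letterRetraction S w ∈ lettersSubgroup (S ∩ T) := by
  suffices h : lettersSubgroup T ≤ (lettersSubgroup (S ∩ T)).comap (letterRetraction S) from h hw
  refine lettersSubgroup_le.2 fun x hx => mem_comap.2 ?_
  by_cases hxS : x ∈ S
  · rw [letterRetraction_of_mem hxS]
    exact of_mem_lettersSubgroup ⟨hxS, hx⟩
  · rw [letterRetraction_of_notMem hxS]
    exact one_mem _

theorem letterRetraction_mem (S : Set X) (w : FreeGroup X) :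
    letterRetraction S w ∈ lettersSubgroup S := by
  obtain ⟨T, -, hw⟩ := exists_finite_mem_lettersSubgroup w
  exact lettersSubgroup_mono Set.inter_subset_left (letterRetraction_mem_inter S hw)

theorem norm_letterRetraction_le [DecidableEq X] (S : Set X) (w : FreeGroup X) :
    (letterRetraction S w).norm ≤ w.norm := by
  refine (norm_lift_le (c := 1) (fun x => ?_) w).trans_eq (one_mul _)
  split_ifs
  · exact (FreeGroup.norm_of x).le
  · exact FreeGroup.norm_one.trans_le zero_le_one

/-- The word `r` is conjugate into the Magnus subgroup generated by `S`. For `S = {b}ᶜ`, the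
negation says that the letter `b` occurs in every conjugate of `r`. -/
def ConjInto (S : Set X) (r : FreeGroup X) : Prop :=
  ∃ u ∈ lettersSubgroup S, IsConj r u

theorem conjInto_of_mem {S : Set X} {r : FreeGroup X} (hr : r ∈ lettersSubgroup S) :
    ConjInto S r := ⟨r, hr, IsConj.refl r⟩

theorem conjInto_empty_iff {r : FreeGroup X} : ConjInto ∅ r ↔ r = 1 := by
  simp only [ConjInto, lettersSubgroup_empty, mem_bot, exists_eq_left, isConj_one_left]

theorem conjInto_singleton_iff {b : X} {r : FreeGroup X} :
    ConjInto {b} r ↔ ∃ k : ℤ, IsConj r (FreeGroup.of b ^ k) := by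
  simp only [ConjInto, lettersSubgroup_singleton, exists_mem_zpowers]

namespace ConjInto

variable {S T : Set X} {r s : FreeGroup X}

theorem mono (h : ConjInto S r) (hST : S ⊆ T) : ConjInto T r :=
  let ⟨u, hu, hru⟩ := h
  ⟨u, lettersSubgroup_mono hST hu, hru⟩

theorem congr (h : ConjInto S r) (hrs : IsConj r s) : ConjInto S s :=
  let ⟨u, hu, hru⟩ := h
  ⟨u, hu, hrs.symm.trans hru⟩

theorem map {S' : Set Y} {f : FreeGroup X →* FreeGroup Y} (h : ConjInto S r)
    (hf : lettersSubgroup S ≤ (lettersSubgroup S').comap f) : ConjInto S' (f r) :=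
  let ⟨u, hu, hru⟩ := h
  ⟨f u, hf hu, f.map_isConj hru⟩

theorem isConj_letterRetraction (h : ConjInto S r) : IsConj r (letterRetraction S r) := by
  obtain ⟨u, hu, hru⟩ := h
  exact hru.trans (letterRetraction_eq_self hu ▸ (letterRetraction S).map_isConj hru.symm)

theorem inter (hS : ConjInto S r) (hT : ConjInto T r) : ConjInto (S ∩ T) r := by
  obtain ⟨u, hu, hru⟩ := hT
  exact ⟨_, letterRetraction_mem_inter S hu, hru.trans (hS.congr hru).isConj_letterRetraction⟩

end ConjInto

theorem exists_not_conjInto_compl_singleton {S : Set X} {r : FreeGroup X} (h : ¬ConjInto S r) :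
    ∃ b ∉ S, ¬ConjInto {b}ᶜ r := by
  by_contra! hall
  obtain ⟨F, hF, hr⟩ := exists_finite_mem_lettersSubgroup r
  have hdiff : ConjInto (F \ (F \ S)) r := by
    refine Set.Finite.induction_on_subset (motive := fun E _ => ConjInto (F \ E) r) _
      (hF.subset Set.sdiff_subset) ?_ fun {b E} hb _ _ ih => ?_
    · exact (conjInto_of_mem hr).mono (by rw [Set.sdiff_empty])
    · exact (ih.inter (hall b hb.2)).mono fun x hx => ⟨hx.1.1, by simp_all⟩
  exact h (hdiff.mono fun x hx => by_contra fun hxS => hx.2 ⟨hx.1, hxS⟩)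

open Classical in
/-- The exponent sum of the letter `t`. -/
noncomputable def exponentSum (t : X) : FreeGroup X →* Multiplicative ℤ :=
  FreeGroup.lift fun x => if x = t then Multiplicative.ofAdd 1 else 1

theorem exponentSum_of_self (t : X) : exponentSum t (FreeGroup.of t) = Multiplicative.ofAdd 1 := by
  rw [exponentSum, FreeGroup.lift_apply_of, if_pos rfl]

theorem exponentSum_of_ne {t x : X} (hx : x ≠ t) : exponentSum t (FreeGroup.of x) = 1 := by
  rw [exponentSum, FreeGroup.lift_apply_of, if_neg hx]

theorem exponentSum_eq_one_of_conjInto {t : X} {r : FreeGroup X} (h : ConjInto {t}ᶜ r) :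
    exponentSum t r = 1 := by
  obtain ⟨u, hu, hru⟩ := h
  rw [isConj_iff_eq.1 ((exponentSum t).map_isConj hru)]
  exact eqOn_lettersSubgroup (g := 1) (fun _ => exponentSum_of_ne) hu

theorem normalClosure_singleton_congr {G : Type*} [Group G] {r s : G} (h : IsConj r s) :
    normalClosure {r} = normalClosure {s} := by
  have hle {r s : G} (h : IsConj r s) : normalClosure {s} ≤ normalClosure {r} := by
    obtain ⟨c, hc⟩ := isConj_iff.1 h
    have hr : r ∈ normalClosure {r} := subset_normalClosure rfl
    exact normalClosure_le_normal
      (Set.singleton_subset_iff.2 (hc ▸ normalClosure_normal.conj_mem r hr c))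
  exact (hle h.symm).antisymm (hle h)

end FreeGroupTools

/-! ### The Magnus rewriting process -/

section Windows

variable {Z : Type u}

/-- The translation `(x, i) ↦ (x, i + m)` of letters indexed by levels. -/
def levelShift (m : ℤ) : FreeGroup (Z × ℤ) ≃* FreeGroup (Z × ℤ) :=
  FreeGroup.freeGroupCongr ((Equiv.refl Z).prodCongr (Equiv.addRight m))

theorem norm_levelShift_le [DecidableEq Z] (m : ℤ) (k : FreeGroup (Z × ℤ)) :
    (levelShift m k).norm ≤ k.norm := by
  conv_lhs => rw [← FreeGroup.mk_toWord (x := k)]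
  exact FreeGroup.norm_mk_le.trans_eq (List.length_map _)

theorem levelShift_levelShift_neg (m : ℤ) (k : FreeGroup (Z × ℤ)) :
    levelShift m (levelShift (-m) k) = k := by
  suffices h : (levelShift m).toMonoidHom.comp (levelShift (-m)).toMonoidHom = MonoidHom.id _ from
    DFunLike.congr_fun h k
  ext p
  exact congrArg (fun i => FreeGroup.of (p.1, i)) (neg_add_cancel_right p.2 m)

/-- The levelled letters, with the levels of the letter `a` restricted to `I`. -/
def window (a : Z) (I : Set ℤ) : Set (Z × ℤ) := {p | p.1 = a → p.2 ∈ I}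

theorem window_mono (a : Z) {I J : Set ℤ} (h : I ⊆ J) : window a I ⊆ window a J :=
  fun _ hp ha => h (hp ha)

theorem levelShift_mem_window {a : Z} {I J : Set ℤ} {m : ℤ} (h : ∀ i ∈ I, i + m ∈ J)
    {k : FreeGroup (Z × ℤ)} (hk : k ∈ lettersSubgroup (window a I)) :
    levelShift m k ∈ lettersSubgroup (window a J) := by
  suffices hle : lettersSubgroup (window a I) ≤
      (lettersSubgroup (window a J)).comap (levelShift m).toMonoidHom from hle hk
  exact lettersSubgroup_le.2 fun p hp => of_mem_lettersSubgroup fun ha => h _ (hp ha)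

theorem exists_mem_window_Icc (a : Z) (r : FreeGroup (Z × ℤ)) :
    ∃ (m : ℤ) (n : ℕ), r ∈ lettersSubgroup (window a (Set.Icc m (m + n))) := by
  obtain ⟨S, hS, hr⟩ := exists_finite_mem_lettersSubgroup r
  obtain ⟨M, hM⟩ := (hS.image Prod.snd).bddAbove
  obtain ⟨m, hm⟩ := (hS.image Prod.snd).bddBelow
  refine ⟨m, (M - m).toNat, lettersSubgroup_mono (fun p hp _ => ⟨?_, ?_⟩) hr⟩
  · exact hm (Set.mem_image_of_mem _ hp)
  · have hpM := hM (Set.mem_image_of_mem _ hp)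
    lia

/-- The levels of the letter `a` in `r` lie between `0` and `D`, and no conjugate of `r` avoids
level `0` or level `D`. -/
structure SpansWindow (a : Z) (D : ℕ) (r : FreeGroup (Z × ℤ)) : Prop where
  mem_Icc : r ∈ lettersSubgroup (window a (Set.Icc 0 D))
  not_Ico : ¬ConjInto (window a (Set.Ico 0 D)) r
  not_Ioc : ¬ConjInto (window a (Set.Ioc 0 D)) r

theorem exists_minimal_window {a : Z} {r : FreeGroup (Z × ℤ)} (h : ¬ConjInto (window a ∅) r) :
    ∃ (m : ℤ) (D : ℕ), ConjInto (window a (Set.Icc m (m + D))) r ∧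
      ¬ConjInto (window a (Set.Ico m (m + D))) r ∧
      ¬ConjInto (window a (Set.Ioc m (m + D))) r := by
  classical
  have hex : ∃ (D : ℕ) (m : ℤ), ConjInto (window a (Set.Icc m (m + D))) r :=
    let ⟨m, n, hr⟩ := exists_mem_window_Icc a r
    ⟨n, m, conjInto_of_mem hr⟩
  obtain ⟨m, hm⟩ := Nat.find_spec hex
  have hmin {I : Set ℤ} {i : ℤ} (hI : I ⊆ Set.Ico i (i + Nat.find hex)) :
      ¬ConjInto (window a I) r := by
    intro hr
    rcases Nat.eq_zero_or_pos (Nat.find hex) with hD | hD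
    · rw [hD, Nat.cast_zero, add_zero, Set.Ico_self] at hI
      exact h (hr.mono (window_mono a hI))
    · refine Nat.find_min hex (Nat.sub_one_lt hD.ne') ⟨i, hr.mono (window_mono a fun j hj => ?_)⟩
      have hj' := hI hj
      exact ⟨hj'.1, by have := hj'.2; lia⟩
  refine ⟨m, Nat.find hex, hm, hmin subset_rfl, hmin (i := m + 1) fun j hj => ?_⟩
  exact ⟨hj.1, by have := hj.2; lia⟩

theorem exists_spansWindow [DecidableEq Z] {a : Z} {r : FreeGroup (Z × ℤ)}
    (h : ¬ConjInto (window a ∅) r) :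
    ∃ (m : ℤ) (D : ℕ) (r' : FreeGroup (Z × ℤ)),
      SpansWindow a D r' ∧ r'.norm ≤ r.norm ∧ IsConj r (levelShift m r') := by
  obtain ⟨m, D, hIcc, hIco, hIoc⟩ := exists_minimal_window h
  have hr := hIcc.isConj_letterRetraction
  set s := letterRetraction (window a (Set.Icc m (m + D))) r
  have hs : s ∈ lettersSubgroup (window a (Set.Icc m (m + D))) := letterRetraction_mem _ r
  have hshift : levelShift m (levelShift (-m) s) = s := levelShift_levelShift_neg m s
  have hnot {I J : Set ℤ} (hI : ¬ConjInto (window a I) r) (h : ∀ i ∈ J, i + m ∈ I) :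
      ¬ConjInto (window a J) (levelShift (-m) s) := by
    intro hc
    have hmap := hc.map (f := (levelShift m).toMonoidHom) fun _ => levelShift_mem_window h
    exact hI (ConjInto.congr (hshift ▸ hmap) hr.symm)
  refine ⟨m, D, levelShift (-m) s, ⟨?_, hnot hIco ?_, hnot hIoc ?_⟩, ?_, hshift.symm ▸ hr⟩
  · exact levelShift_mem_window (J := Set.Icc 0 (D : ℤ))
      (fun i (hi : i ∈ Set.Icc m (m + D)) => ⟨by have := hi.1; lia, by have := hi.2; lia⟩) hs
  · exact fun i ⟨hl, hu⟩ => ⟨by lia, by lia⟩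
  · exact fun i ⟨hl, hu⟩ => ⟨by lia, by lia⟩
  · exact (norm_levelShift_le _ _).trans (norm_letterRetraction_le _ r)

end Windows

section Rewriting

variable {X : Type u} {t : X}

variable (t) in
/-- The letters of the Magnus rewriting: `(x, i)` stands for `t ^ i * x * t ^ (-i)`. -/
abbrev MagnusLetter := {x : X // x ≠ t} × ℤ

variable (t) in
/-- The interpretation of words in the Magnus letters, with image the kernel of the exponent sum
of `t`. -/
def magnusHom : FreeGroup (MagnusLetter t) →* FreeGroup X :=
  FreeGroup.lift fun p => FreeGroup.of t ^ p.2 * FreeGroup.of p.1.1 * FreeGroup.of t ^ (-p.2)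

theorem magnusHom_of (p : MagnusLetter t) : magnusHom t (FreeGroup.of p) =
    FreeGroup.of t ^ p.2 * FreeGroup.of p.1.1 * FreeGroup.of t ^ (-p.2) :=
  FreeGroup.lift_apply_of

theorem magnusHom_levelShift (m : ℤ) (k : FreeGroup (MagnusLetter t)) :
    magnusHom t (levelShift m k) =
      FreeGroup.of t ^ m * magnusHom t k * (FreeGroup.of t ^ m)⁻¹ := by
  suffices h : (magnusHom t).comp (levelShift m).toMonoidHom =
      (MulAut.conj (FreeGroup.of t ^ m)).toMonoidHom.comp (magnusHom t) from DFunLike.congr_fun h k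
  ext p
  change magnusHom t (FreeGroup.of (p.1, p.2 + m)) =
    FreeGroup.of t ^ m * magnusHom t (FreeGroup.of p) * (FreeGroup.of t ^ m)⁻¹
  rw [magnusHom_of, magnusHom_of]
  group

theorem exponentSum_magnusHom (k : FreeGroup (MagnusLetter t)) :
    exponentSum t (magnusHom t k) = 1 := by
  suffices h : (exponentSum t).comp (magnusHom t) = 1 from DFunLike.congr_fun h k
  ext p
  simp only [MonoidHom.comp_apply, magnusHom_of, map_mul, exponentSum_of_ne p.1.2,
    mul_one, zpow_neg, map_inv, mul_inv_cancel, MonoidHom.one_apply]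

theorem magnusHom_mem_lettersSubgroup {b : {x // x ≠ t}} {k : FreeGroup (MagnusLetter t)}
    (hk : k ∈ lettersSubgroup (window b ∅)) : magnusHom t k ∈ lettersSubgroup {b.1}ᶜ := by
  suffices h : lettersSubgroup (window b ∅) ≤ (lettersSubgroup {b.1}ᶜ).comap (magnusHom t) from h hk
  refine lettersSubgroup_le.2 fun p hp => ?_
  have ht : FreeGroup.of t ∈ lettersSubgroup {b.1}ᶜ := of_mem_lettersSubgroup fun h => b.2 h.symm
  have hx : FreeGroup.of p.1.1 ∈ lettersSubgroup {b.1}ᶜ :=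
    of_mem_lettersSubgroup fun h => hp (Subtype.ext h)
  rw [Subgroup.mem_comap, magnusHom_of]
  exact mul_mem (mul_mem (zpow_mem ht _) hx) (zpow_mem ht _)

variable [DecidableEq X]

/-- The word `g` equals `k * t ^ e` for some integer `e` and some word `k` in at most `n` Magnus
letters. -/
def MagnusLengthLE (t : X) (g : FreeGroup X) (n : ℕ) : Prop :=
  ∃ (k : FreeGroup (MagnusLetter t)) (e : ℤ), g = magnusHom t k * FreeGroup.of t ^ e ∧ k.norm ≤ n

theorem magnusLengthLE_zpow (e : ℤ) : MagnusLengthLE t (FreeGroup.of t ^ e) 0 :=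
  ⟨1, e, by rw [map_one, one_mul], FreeGroup.norm_one.le⟩

theorem magnusLengthLE_of {x : X} (hx : x ≠ t) : MagnusLengthLE t (FreeGroup.of x) 1 :=
  ⟨FreeGroup.of (⟨x, hx⟩, 0), 0, by simp [magnusHom_of], (FreeGroup.norm_of _).le⟩

namespace MagnusLengthLE

variable {g h : FreeGroup X} {m n : ℕ}

theorem mul (hg : MagnusLengthLE t g m) (hh : MagnusLengthLE t h n) :
    MagnusLengthLE t (g * h) (m + n) := by
  obtain ⟨k, e, rfl, hk⟩ := hg
  obtain ⟨l, f, rfl, hl⟩ := hh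
  refine ⟨k * levelShift e l, e + f, ?_, (FreeGroup.norm_mul_le _ _).trans <|
    add_le_add hk ((norm_levelShift_le e l).trans hl)⟩
  rw [map_mul, magnusHom_levelShift, zpow_add]
  group

theorem inv (hg : MagnusLengthLE t g n) : MagnusLengthLE t g⁻¹ n := by
  obtain ⟨k, e, rfl, hk⟩ := hg
  refine ⟨levelShift (-e) k⁻¹, -e, ?_, (norm_levelShift_le _ _).trans <|
    FreeGroup.norm_inv_eq.trans_le hk⟩
  rw [magnusHom_levelShift, map_inv]
  group

theorem exists_magnusHom_eq (hg : MagnusLengthLE t g n) (he : exponentSum t g = 1) :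
    ∃ k, magnusHom t k = g ∧ k.norm ≤ n := by
  obtain ⟨k, e, rfl, hk⟩ := hg
  rw [map_mul, exponentSum_magnusHom, one_mul, map_zpow, exponentSum_of_self, ← ofAdd_zsmul,
    ofAdd_eq_one, smul_eq_mul, mul_one] at he
  exact ⟨k, by rw [he, zpow_zero, mul_one], hk⟩

theorem map_mk {θ : FreeGroup X →* FreeGroup X} (ht : MagnusLengthLE t (θ (FreeGroup.of t)) 0)
    (hx : ∀ x ≠ t, MagnusLengthLE t (θ (FreeGroup.of x)) 1) (L : List (X × Bool)) :
    MagnusLengthLE t (θ (FreeGroup.mk L)) (L.countP (·.1 ≠ t)) := by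
  induction L with
  | nil => exact (map_one θ).symm ▸ magnusLengthLE_zpow (t := t) 0
  | cons p L ih =>
    have hletter : MagnusLengthLE t (θ (FreeGroup.of p.1)) (if p.1 = t then 0 else 1) := by
      split_ifs with h
      · exact h ▸ ht
      · exact hx _ h
    have hp : MagnusLengthLE t (θ (FreeGroup.mk [p])) (if p.1 = t then 0 else 1) := by
      obtain ⟨x, _ | _⟩ := p
      · have hinv := hletter.inv
        rwa [← map_inv] at hinv
      · exact hletter
    have hcount : (p :: L).countP (·.1 ≠ t) = (if p.1 = t then 0 else 1) + L.countP (·.1 ≠ t) := by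
      rw [List.countP_cons, add_comm]
      simp only [decide_eq_true_eq, ite_not]
    rw [hcount, ← List.singleton_append, ← FreeGroup.mul_mk, map_mul]
    exact hp.mul ih

end MagnusLengthLE

theorem exists_shorter_magnusHom_eq {θ : FreeGroup X →* FreeGroup X}
    (ht : MagnusLengthLE t (θ (FreeGroup.of t)) 0)
    (hx : ∀ x ≠ t, MagnusLengthLE t (θ (FreeGroup.of x)) 1) {r : FreeGroup X}
    (hr : r ∉ lettersSubgroup {t}ᶜ) (he : exponentSum t (θ r) = 1) :
    ∃ k, magnusHom t k = θ r ∧ k.norm < r.norm := by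
  have hlen := MagnusLengthLE.map_mk ht hx r.toWord
  rw [FreeGroup.mk_toWord] at hlen
  obtain ⟨k, hk, hkn⟩ := hlen.exists_magnusHom_eq he
  refine ⟨k, hk, hkn.trans_lt ((List.countP_le_length).lt_of_ne fun heq => hr ?_)⟩
  have hmem := mk_mem_lettersSubgroup (S := {t}ᶜ) (L := r.toWord) (by simpa using heq)
  rwa [FreeGroup.mk_toWord] at hmem

end Rewriting

/-! ### The HNN decomposition of a rewritten one-relator group -/

section FreiheitssatzProperty

variable {X : Type u} {r s : FreeGroup X}

/-- The conclusion of the Freiheitssatz for `r`: a Magnus subgroup into which `r` is not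
conjugate embeds in the one-relator group with relator `r`. -/
def SatisfiesFreiheitssatz (r : FreeGroup X) : Prop :=
  ∀ S : Set X, ¬ConjInto S r → Disjoint (lettersSubgroup S) (Subgroup.normalClosure {r})

theorem SatisfiesFreiheitssatz.congr (h : SatisfiesFreiheitssatz r) (hrs : IsConj r s) :
    SatisfiesFreiheitssatz s := fun _ hS =>
  normalClosure_singleton_congr hrs ▸ h _ fun hr => hS (hr.congr hrs)

theorem satisfiesFreiheitssatz_of_compl_singleton
    (h : ∀ b, ¬ConjInto {b}ᶜ r → Disjoint (lettersSubgroup {b}ᶜ) (Subgroup.normalClosure {r})) :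
    SatisfiesFreiheitssatz r := fun _ hS =>
  let ⟨b, hb, hbr⟩ := exists_not_conjInto_compl_singleton hS
  (h b hbr).mono_left (lettersSubgroup_mono (Set.subset_compl_singleton_iff.2 hb))

theorem SatisfiesFreiheitssatz.injective_mk (h : SatisfiesFreiheitssatz r) {S : Set X}
    (hS : ¬ConjInto S r) :
    Function.Injective ((PresentedGroup.mk {r}).comp (lettersSubgroup S).subtype) :=
  (injective_iff_map_eq_one _).2 fun w hw =>
    Subtype.ext (Subgroup.disjoint_def.1 (h S hS) w.2 (PresentedGroup.mk_eq_one_iff.1 hw))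

end FreiheitssatzProperty

section LevelMaps

variable {Z : Type u} (a : Z) (D : ℕ) (r : FreeGroup (Z × ℤ))

/-- The words in the letters of a window without its top level, in the one-relator group. -/
def lowerMap : lettersSubgroup (window a (Set.Ico 0 D)) →* PresentedGroup {r} :=
  (PresentedGroup.mk {r}).comp (Subgroup.subtype _)

/-- The words in the letters of a window without its top level, moved up by one level, in the
one-relator group. -/
def upperMap : lettersSubgroup (window a (Set.Ico 0 D)) →* PresentedGroup {r} :=
  (PresentedGroup.mk {r}).comp ((levelShift 1).toMonoidHom.comp (Subgroup.subtype _))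

variable {a D r}

theorem lowerMap_injective (hr : SpansWindow a D r) (hF : SatisfiesFreiheitssatz r) :
    Function.Injective (lowerMap a D r) :=
  hF.injective_mk hr.not_Ico

theorem upperMap_injective (hr : SpansWindow a D r) (hF : SatisfiesFreiheitssatz r) :
    Function.Injective (upperMap a D r) := by
  intro v w hvw
  have hmem (w : lettersSubgroup (window a (Set.Ico 0 D))) :
      levelShift 1 w.1 ∈ lettersSubgroup (window a (Set.Ioc 0 D)) :=
    levelShift_mem_window (fun i (hi : i ∈ Set.Ico 0 (D : ℤ)) =>
      (⟨by have := hi.1; lia, by have := hi.2; lia⟩ : i + 1 ∈ Set.Ioc 0 (D : ℤ))) w.2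
  have h := hF.injective_mk hr.not_Ioc (a₁ := ⟨_, hmem v⟩) (a₂ := ⟨_, hmem w⟩) hvw
  exact Subtype.ext ((levelShift 1).injective (congrArg Subtype.val h))

/-- The shift between the two families of words of `lowerMap` and `upperMap`. -/
noncomputable def windowEquiv (hr : SpansWindow a D r) (hF : SatisfiesFreiheitssatz r) :
    (lowerMap a D r).range ≃* (upperMap a D r).range :=
  (MonoidHom.ofInjective (lowerMap_injective hr hF)).symm.trans
    (MonoidHom.ofInjective (upperMap_injective hr hF))

theorem windowEquiv_apply (hr : SpansWindow a D r) (hF : SatisfiesFreiheitssatz r)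
    (w : lettersSubgroup (window a (Set.Ico 0 D))) :
    windowEquiv hr hF ⟨lowerMap a D r w, w, rfl⟩ = ⟨upperMap a D r w, w, rfl⟩ :=
  congrArg (MonoidHom.ofInjective (upperMap_injective hr hF))
    ((MonoidHom.ofInjective (lowerMap_injective hr hF)).symm_apply_apply w)

theorem eq_one_of_mem_range_of_isOfFinOrder {K G : Type*} [Group K] [IsMulTorsionFree K] [Group G]
    {f : K →* G} (hf : Function.Injective f) {x : G} (hx : x ∈ f.range) (hfin : IsOfFinOrder x) :
    x = 1 := by
  obtain ⟨w, rfl⟩ := hx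
  rw [(hf.isOfFinOrder_iff.1 hfin).eq_one', map_one]

end LevelMaps

section MagnusHNN

open HNNExtension

variable {X : Type u} {t : X} {a : {x // x ≠ t}} {D : ℕ} {r : FreeGroup (MagnusLetter t)}

/-- The HNN extension of the one-relator group on the Magnus letters whose stable letter moves the
levels up by one. -/
abbrev MagnusHNN (hr : SpansWindow a D r) (hF : SatisfiesFreiheitssatz r) : Type u :=
  HNNExtension (PresentedGroup {r}) (lowerMap a D r).range (upperMap a D r).range
    (windowEquiv hr hF)

variable (hr : SpansWindow a D r) (hF : SatisfiesFreiheitssatz r)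

/-- The class of a word in the Magnus letters. -/
noncomputable def magnusHNNMk : FreeGroup (MagnusLetter t) →* MagnusHNN hr hF :=
  (of : PresentedGroup {r} →* _).comp (PresentedGroup.mk {r})

theorem magnusHNNMk_levelShift {k : FreeGroup (MagnusLetter t)}
    (hk : k ∈ lettersSubgroup (window a (Set.Ico 0 D))) :
    magnusHNNMk hr hF (levelShift 1 k) =
      HNNExtension.t * magnusHNNMk hr hF k * HNNExtension.t⁻¹ := by
  have h := equiv_eq_conj (φ := windowEquiv hr hF) ⟨lowerMap a D r ⟨k, hk⟩, _, rfl⟩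
  rwa [windowEquiv_apply] at h

theorem magnusHNNMk_of_level {x : {x // x ≠ t}} {i : ℤ} (hi : (x, i) ∈ window a (Set.Icc 0 D)) :
    magnusHNNMk hr hF (FreeGroup.of (x, i)) =
      HNNExtension.t ^ i * magnusHNNMk hr hF (FreeGroup.of (x, 0)) * HNNExtension.t ^ (-i) := by
  have hstep {j : ℤ} (hj : x = a → 0 ≤ j ∧ j < D) : magnusHNNMk hr hF (FreeGroup.of (x, j + 1)) =
      HNNExtension.t * magnusHNNMk hr hF (FreeGroup.of (x, j)) * HNNExtension.t⁻¹ :=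
    magnusHNNMk_levelShift hr hF (of_mem_lettersSubgroup (x := (x, j)) hj)
  induction i with
  | zero => simp only [zpow_zero, one_mul, neg_zero, mul_one]
  | succ n ih =>
    have hn : x = a → 0 ≤ (n : ℤ) ∧ (n : ℤ) < D := fun hx => by have := (hi hx).2; lia
    rw [hstep hn, ih fun hx => ⟨(hn hx).1, (hn hx).2.le⟩, zpow_add_one]
    group
  | pred n ih =>
    have hxa : x ≠ a := fun hx => by have := (hi hx).1; lia
    have h := hstep (j := -n - 1) fun hx => absurd hx hxa
    rw [sub_add_cancel, ih fun hx => absurd hx hxa] at h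
    rw [← mul_left_inj (HNNExtension.t⁻¹), ← mul_right_inj HNNExtension.t, ← mul_assoc, ← h]
    group

open Classical in
/-- The letter `t` acts as the stable letter, and `x` is the Magnus letter `(x, 0)`. -/
noncomputable def magnusHNNLift : FreeGroup X →* MagnusHNN hr hF :=
  FreeGroup.lift fun x =>
    if h : x = t then HNNExtension.t else magnusHNNMk hr hF (FreeGroup.of (⟨x, h⟩, 0))

theorem magnusHNNLift_of_self : magnusHNNLift hr hF (FreeGroup.of t) = HNNExtension.t := by
  rw [magnusHNNLift, FreeGroup.lift_apply_of, dif_pos rfl]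

theorem magnusHNNLift_of_ne (x : {x // x ≠ t}) :
    magnusHNNLift hr hF (FreeGroup.of x.1) = magnusHNNMk hr hF (FreeGroup.of (x, 0)) := by
  rw [magnusHNNLift, FreeGroup.lift_apply_of, dif_neg x.2]

theorem magnusHNNLift_magnusHom {k : FreeGroup (MagnusLetter t)}
    (hk : k ∈ lettersSubgroup (window a (Set.Icc 0 D))) :
    magnusHNNLift hr hF (magnusHom t k) = magnusHNNMk hr hF k := by
  refine eqOn_lettersSubgroup (f := (magnusHNNLift hr hF).comp (magnusHom t)) (fun p hp => ?_) hk
  rw [MonoidHom.comp_apply, magnusHom_of, map_mul, map_mul, map_zpow, map_zpow,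
    magnusHNNLift_of_self, magnusHNNLift_of_ne]
  exact (magnusHNNMk_of_level hr hF hp).symm

theorem magnusHNNMk_self : magnusHNNMk hr hF r = 1 := by
  rw [magnusHNNMk, MonoidHom.comp_apply, PresentedGroup.one_of_mem (Set.mem_singleton r), map_one]

/-- The Magnus embedding of a one-relator group into an HNN extension of the rewritten group. -/
noncomputable def magnusEmbedding : PresentedGroup {magnusHom t r} →* MagnusHNN hr hF :=
  QuotientGroup.lift _ (magnusHNNLift hr hF) <| Subgroup.normalClosure_le_normal <|
    Set.singleton_subset_iff.2 <|
      (magnusHNNLift_magnusHom hr hF hr.mem_Icc).trans (magnusHNNMk_self hr hF)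

theorem magnusEmbedding_injective : Function.Injective (magnusEmbedding hr hF) := by
  have hrel : Subgroup.normalClosure {r} ≤
      ((PresentedGroup.mk {magnusHom t r}).comp (magnusHom t)).ker :=
    Subgroup.normalClosure_le_normal <| Set.singleton_subset_iff.2 <|
      PresentedGroup.one_of_mem (Set.mem_singleton _)
  let f : PresentedGroup {r} →* PresentedGroup {magnusHom t r} := QuotientGroup.lift _ _ hrel
  have hf (k : FreeGroup (MagnusLetter t)) :
      f (PresentedGroup.mk {r} k) = PresentedGroup.mk {magnusHom t r} (magnusHom t k) := rfl
  have ht (x : (lowerMap a D r).range) : PresentedGroup.mk {magnusHom t r} (FreeGroup.of t) * f x =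
      f (windowEquiv hr hF x) * PresentedGroup.mk {magnusHom t r} (FreeGroup.of t) := by
    obtain ⟨_, w, rfl⟩ := x
    rw [windowEquiv_apply]
    change _ * f (PresentedGroup.mk {r} w) = f (PresentedGroup.mk {r} (levelShift 1 w)) * _
    rw [hf, hf, magnusHom_levelShift, zpow_one, ← map_mul, ← map_mul, inv_mul_cancel_right]
  refine Function.LeftInverse.injective (g := HNNExtension.lift f _ ht) fun g => ?_
  suffices h : (HNNExtension.lift f _ ht).comp (magnusEmbedding hr hF) = MonoidHom.id _ from
    DFunLike.congr_fun h g
  refine PresentedGroup.ext fun x => ?_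
  change HNNExtension.lift f _ ht (magnusHNNLift hr hF (FreeGroup.of x)) = PresentedGroup.of x
  obtain rfl | hx := eq_or_ne x t
  · rw [magnusHNNLift_of_self, lift_t]
    rfl
  · rw [magnusHNNLift_of_ne hr hF ⟨x, hx⟩, magnusHNNMk, MonoidHom.comp_apply, lift_of, hf,
      magnusHom_of, zpow_zero, one_mul, neg_zero, zpow_zero, mul_one]
    rfl

include hr hF in
theorem mem_normalClosure_of_magnusHom_mem {k : FreeGroup (MagnusLetter t)}
    (hk : k ∈ lettersSubgroup (window a (Set.Icc 0 D)))
    (h : magnusHom t k ∈ Subgroup.normalClosure {magnusHom t r}) :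
    k ∈ Subgroup.normalClosure {r} := by
  refine PresentedGroup.mk_eq_one_iff.1 (of_injective (φ := windowEquiv hr hF) ?_)
  calc magnusHNNMk hr hF k = magnusHNNLift hr hF (magnusHom t k) :=
        (magnusHNNLift_magnusHom hr hF hk).symm
    _ = magnusEmbedding hr hF (PresentedGroup.mk _ (magnusHom t k)) := rfl
    _ = of 1 := by rw [PresentedGroup.mk_eq_one_iff.2 h, map_one, map_one]

include hr hF in
theorem HasTorsionCentralizers.presentedGroup_magnusHom
    (h : HasTorsionCentralizers (PresentedGroup {r})) :
    HasTorsionCentralizers (PresentedGroup {magnusHom t r}) :=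
  (h.hnnExtension
    (fun _ => eq_one_of_mem_range_of_isOfFinOrder (lowerMap_injective hr hF))
    (fun _ => eq_one_of_mem_range_of_isOfFinOrder (upperMap_injective hr hF))).of_injective
    (magnusEmbedding_injective hr hF)

end MagnusHNN

/-! ### Adjunction of roots -/

theorem exists_zpow_eq_map {G : Type u} [Group G] (a : G) {n : ℤ} (hn : n ≠ 0) :
    ∃ (H : Type u) (_ : Group H) (j : G →* H) (s : H), Function.Injective j ∧ s ^ n = j a := by
  -- `n` cyclically arranged copies of `G`; passing from the last to the first multiplies by `a`.
  let Ω := G × {i : ℤ // i % n = i}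
  have hdiv (i : {i : ℤ // i % n = i}) : i.1 / n = 0 := by
    have h := Int.emod_add_mul_ediv i.1 n
    rw [i.2, add_eq_left] at h
    exact (mul_eq_zero.1 h).resolve_left hn
  let turn (m : ℤ) (ω : Ω) : Ω :=
    (a ^ ((ω.2.1 + m) / n) * ω.1, ⟨(ω.2.1 + m) % n, Int.emod_emod_of_dvd _ dvd_rfl⟩)
  have turn_zero (ω : Ω) : turn 0 ω = ω := Prod.ext
    (by simp only [turn, add_zero, hdiv, zpow_zero, one_mul])
    (Subtype.ext (by simp only [turn, add_zero, ω.2.2]))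
  have turn_add (l m : ℤ) (ω : Ω) : turn (l + m) ω = turn l (turn m ω) := by
    have hi : ω.2.1 + (l + m) = (ω.2.1 + m) % n + l + n * ((ω.2.1 + m) / n) := by
      linear_combination -Int.emod_add_mul_ediv (ω.2.1 + m) n
    refine Prod.ext ?_ (Subtype.ext ?_)
    · simp only [turn, hi, Int.add_mul_ediv_left _ _ hn, zpow_add, mul_assoc]
    · simp only [turn, hi, Int.add_mul_emod_self_left]
  have turn_self (ω : Ω) : turn n ω = (a * ω.1, ω.2) := Prod.ext
    (by simp only [turn, Int.add_ediv_of_dvd_right dvd_rfl, Int.ediv_self hn, hdiv, zero_add,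
      zpow_one])
    (Subtype.ext (by simp only [turn, Int.add_emod_right, ω.2.2]))
  let s : Multiplicative ℤ →* Equiv.Perm Ω := MonoidHom.toHomPerm
    { toFun m := turn m.toAdd
      map_one' := funext turn_zero
      map_mul' l m := funext (turn_add l.toAdd m.toAdd) }
  let j : G →* Equiv.Perm Ω := MonoidHom.toHomPerm
    { toFun g ω := (g * ω.1, ω.2)
      map_one' := funext fun ω => Prod.ext (one_mul ω.1) rfl
      map_mul' g h := funext fun ω => Prod.ext (mul_assoc g h ω.1) rfl }
  refine ⟨Equiv.Perm Ω, inferInstance, j, s (Multiplicative.ofAdd 1), fun g h hgh => ?_, ?_⟩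
  · exact mul_right_cancel (congrArg Prod.fst (Equiv.congr_fun hgh (1, ⟨0, Int.zero_emod n⟩)))
  · rw [← map_zpow, ← ofAdd_zsmul, zsmul_one]
    exact Equiv.ext turn_self

section RootSubstitution

variable {X : Type u} [DecidableEq X] {a b : X} {α β : ℤ}

/-- The substitution `a ↦ a ^ β`, `b ↦ b * a ^ (-α)`. If `α` and `β` are the exponent sums of `a`
and `b` in `r`, then `a` has exponent sum zero in the image of `r`. -/
def rootSubst (a b : X) (α β : ℤ) : FreeGroup X →* FreeGroup X :=
  FreeGroup.lift <| Function.update (Function.update FreeGroup.of b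
    (FreeGroup.of b * FreeGroup.of a ^ (-α))) a (FreeGroup.of a ^ β)

theorem rootSubst_of_left : rootSubst a b α β (FreeGroup.of a) = FreeGroup.of a ^ β := by
  rw [rootSubst, FreeGroup.lift_apply_of, Function.update_self]

theorem rootSubst_of_right (hab : a ≠ b) :
    rootSubst a b α β (FreeGroup.of b) = FreeGroup.of b * FreeGroup.of a ^ (-α) := by
  rw [rootSubst, FreeGroup.lift_apply_of, Function.update_of_ne hab.symm, Function.update_self]

theorem rootSubst_of_ne {x : X} (hxa : x ≠ a) (hxb : x ≠ b) :
    rootSubst a b α β (FreeGroup.of x) = FreeGroup.of x := by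
  rw [rootSubst, FreeGroup.lift_apply_of, Function.update_of_ne hxa, Function.update_of_ne hxb]

theorem exponentSum_left_rootSubst (hab : a ≠ b) (w : FreeGroup X) :
    exponentSum a (rootSubst a b α β w) = exponentSum a w ^ β * exponentSum b w ^ (-α) := by
  suffices h : (exponentSum a).comp (rootSubst a b α β) =
      (zpowGroupHom β).comp (exponentSum a) * (zpowGroupHom (-α)).comp (exponentSum b) from
    DFunLike.congr_fun h w
  refine FreeGroup.ext_hom _ _ fun x => ?_
  simp only [MonoidHom.comp_apply, MonoidHom.mul_apply, zpowGroupHom_apply]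
  obtain rfl | hxa := eq_or_ne x a
  · rw [rootSubst_of_left, map_zpow, exponentSum_of_ne hab, one_zpow, mul_one]
  obtain rfl | hxb := eq_or_ne x b
  · rw [rootSubst_of_right hab, map_mul, map_zpow, exponentSum_of_ne hxa, exponentSum_of_self,
      exponentSum_of_self, one_zpow]
  · rw [rootSubst_of_ne hxa hxb, exponentSum_of_ne hxa, exponentSum_of_ne hxb, one_zpow, one_zpow,
      mul_one]

theorem exponentSum_right_rootSubst (hab : a ≠ b) (w : FreeGroup X) :
    exponentSum b (rootSubst a b α β w) = exponentSum b w := by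
  suffices h : (exponentSum b).comp (rootSubst a b α β) = exponentSum b from DFunLike.congr_fun h w
  refine FreeGroup.ext_hom _ _ fun x => ?_
  rw [MonoidHom.comp_apply]
  obtain rfl | hxa := eq_or_ne x a
  · rw [rootSubst_of_left, map_zpow, exponentSum_of_ne hab, one_zpow]
  obtain rfl | hxb := eq_or_ne x b
  · rw [rootSubst_of_right hab, map_mul, map_zpow, exponentSum_of_ne hab, one_zpow, mul_one]
  · rw [rootSubst_of_ne hxa hxb]

theorem rootSubst_mem_lettersSubgroup (hab : a ≠ b) {w : FreeGroup X}
    (hw : w ∈ lettersSubgroup {b}ᶜ) : rootSubst a b α β w ∈ lettersSubgroup {b}ᶜ := by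
  suffices h : lettersSubgroup {b}ᶜ ≤ (lettersSubgroup {b}ᶜ).comap (rootSubst a b α β) from h hw
  refine lettersSubgroup_le.2 fun x hxb => Subgroup.mem_comap.2 ?_
  obtain rfl | hxa := eq_or_ne x a
  · rw [rootSubst_of_left]
    exact zpow_mem (of_mem_lettersSubgroup hxb) _
  · rw [rootSubst_of_ne hxa hxb]
    exact of_mem_lettersSubgroup hxb

theorem exists_rootSubst_eq_map (hab : a ≠ b) (hβ : β ≠ 0) {G : Type u} [Group G]
    (f : FreeGroup X →* G) : ∃ (H : Type u) (_ : Group H) (j : G →* H) (g : FreeGroup X →* H),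
      Function.Injective j ∧ ∀ w, g (rootSubst a b α β w) = j (f w) := by
  obtain ⟨H, _, j, s, hj, hs⟩ := exists_zpow_eq_map (f (FreeGroup.of a)) hβ
  let g : FreeGroup X →* H := FreeGroup.lift <| Function.update (Function.update
    (fun x => j (f (FreeGroup.of x))) b (j (f (FreeGroup.of b)) * s ^ α)) a s
  refine ⟨H, _, j, g, hj, DFunLike.congr_fun (?_ : g.comp (rootSubst a b α β) = j.comp f)⟩
  have hga : g (FreeGroup.of a) = s := by
    rw [FreeGroup.lift_apply_of, Function.update_self]
  have hg {x : X} (hx : x ≠ a) : g (FreeGroup.of x) =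
      Function.update (fun x => j (f (FreeGroup.of x))) b (j (f (FreeGroup.of b)) * s ^ α) x := by
    rw [FreeGroup.lift_apply_of, Function.update_of_ne hx]
  refine FreeGroup.ext_hom _ _ fun x => ?_
  rw [MonoidHom.comp_apply, MonoidHom.comp_apply]
  obtain rfl | hxa := eq_or_ne x a
  · rw [rootSubst_of_left, map_zpow, hga, hs]
  obtain rfl | hxb := eq_or_ne x b
  · rw [rootSubst_of_right hab, map_mul, map_zpow, hga, hg hxa, Function.update_self, mul_assoc,
      ← zpow_add, add_neg_cancel, zpow_zero, mul_one]
  · rw [rootSubst_of_ne hxa hxb, hg hxa, Function.update_of_ne hxb]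

theorem rootSubst_injective (hab : a ≠ b) (hβ : β ≠ 0) :
    Function.Injective (rootSubst a b α β) := by
  obtain ⟨H, _, j, g, hj, hg⟩ := exists_rootSubst_eq_map hab hβ (α := α) (MonoidHom.id _)
  exact fun v w hvw => hj (by rw [← MonoidHom.id_apply _ v, ← hg, hvw, hg, MonoidHom.id_apply])

theorem rootSubst_mem_normalClosure (hab : a ≠ b) (hβ : β ≠ 0) {r w : FreeGroup X} :
    rootSubst a b α β w ∈ Subgroup.normalClosure {rootSubst a b α β r} ↔
      w ∈ Subgroup.normalClosure {r} := by
  obtain ⟨H, _, j, g, hj, hg⟩ := exists_rootSubst_eq_map hab hβ (α := α) (PresentedGroup.mk {r})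
  constructor
  · intro hw
    have hle : Subgroup.normalClosure {rootSubst a b α β r} ≤ g.ker :=
      Subgroup.normalClosure_le_normal <| Set.singleton_subset_iff.2 <| MonoidHom.mem_ker.2 <| by
        rw [hg, PresentedGroup.one_of_mem (Set.mem_singleton r), map_one]
    have hw1 : j (PresentedGroup.mk {r} w) = j 1 := by rw [← hg, hle hw, map_one]
    exact PresentedGroup.mk_eq_one_iff.1 (hj hw1)
  · intro hw
    have hle := Subgroup.map_normalClosure_le {r} (rootSubst a b α β)
    rw [Set.image_singleton] at hle
    exact hle (Subgroup.mem_map_of_mem _ hw)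

theorem HasTorsionCentralizers.of_rootSubst (hab : a ≠ b) (hβ : β ≠ 0) {r : FreeGroup X}
    (h : HasTorsionCentralizers (PresentedGroup {rootSubst a b α β r})) :
    HasTorsionCentralizers (PresentedGroup {r}) := by
  refine h.of_injective (f := PresentedGroup.map (rootSubst a b α β)
    (Set.mapsTo_singleton.2 (Set.mem_singleton _))) ((injective_iff_map_eq_one _).2 fun g hg => ?_)
  obtain ⟨w, rfl⟩ := PresentedGroup.mk_surjective _ g
  exact PresentedGroup.mk_eq_one_iff.2 <|
    (rootSubst_mem_normalClosure hab hβ).1 (PresentedGroup.mk_eq_one_iff.1 hg)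

theorem magnusLengthLE_rootSubst_of_left :
    MagnusLengthLE a (rootSubst a b α β (FreeGroup.of a)) 0 := by
  rw [rootSubst_of_left]
  exact magnusLengthLE_zpow β

theorem magnusLengthLE_rootSubst_of_ne {b x : X} (hx : x ≠ a) :
    MagnusLengthLE a (rootSubst a b α β (FreeGroup.of x)) 1 := by
  obtain rfl | hxb := eq_or_ne x b
  · rw [rootSubst_of_right hx.symm]
    exact (magnusLengthLE_of hx).mul (magnusLengthLE_zpow _)
  · rw [rootSubst_of_ne hx hxb]
    exact magnusLengthLE_of hx

end RootSubstitution

/-! ### The Freiheitssatz -/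

section MagnusRange

variable {X : Type u} {t : X}

theorem range_magnusHom : (magnusHom t).range = (exponentSum t).ker := by
  classical
  refine le_antisymm ?_ fun w hw => ?_
  · rintro _ ⟨k, rfl⟩
    exact exponentSum_magnusHom k
  · have hlen := MagnusLengthLE.map_mk (t := t) (θ := MonoidHom.id _)
      ⟨1, 1, by simp, FreeGroup.norm_one.le⟩ (fun _ => magnusLengthLE_of) w.toWord
    rw [FreeGroup.mk_toWord] at hlen
    obtain ⟨k, hk, -⟩ := hlen.exists_magnusHom_eq hw
    exact ⟨k, hk⟩

theorem map_magnusHom_lettersSubgroup_zero :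
    (lettersSubgroup {p : MagnusLetter t | p.2 = 0}).map (magnusHom t) = lettersSubgroup {t}ᶜ := by
  have hof (x : {x // x ≠ t}) : magnusHom t (FreeGroup.of (x, 0)) = FreeGroup.of x.1 := by
    rw [magnusHom_of, neg_zero, zpow_zero, one_mul, mul_one]
  refine le_antisymm (Subgroup.map_le_iff_le_comap.2 (lettersSubgroup_le.2 ?_))
    (lettersSubgroup_le.2 fun x hx => ?_)
  · rintro ⟨x, _⟩ rfl
    rw [Subgroup.mem_comap, hof]
    exact of_mem_lettersSubgroup x.2
  · exact ⟨_, of_mem_lettersSubgroup rfl, hof ⟨x, hx⟩⟩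

theorem letterRetraction_magnusHom (b : {x // x ≠ t}) (k : FreeGroup (MagnusLetter t)) :
    letterRetraction {b.1}ᶜ (magnusHom t k) = magnusHom t (letterRetraction (window b ∅) k) := by
  suffices h : (letterRetraction {b.1}ᶜ).comp (magnusHom t) =
      (magnusHom t).comp (letterRetraction (window b ∅)) from DFunLike.congr_fun h k
  refine FreeGroup.ext_hom _ _ fun p => ?_
  have ht : letterRetraction {b.1}ᶜ (FreeGroup.of t) = FreeGroup.of t :=
    letterRetraction_of_mem fun h => b.2 h.symm
  rw [MonoidHom.comp_apply, MonoidHom.comp_apply, magnusHom_of, map_mul, map_mul, map_zpow,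
    map_zpow, ht]
  obtain hp | hp := eq_or_ne p.1 b
  · rw [letterRetraction_of_notMem (S := window b ∅) fun h => h hp,
      letterRetraction_of_notMem (S := {b.1}ᶜ) fun h => h (congrArg Subtype.val hp), map_one]
    group
  · rw [letterRetraction_of_mem (S := window b ∅) fun h => absurd h hp,
      letterRetraction_of_mem (S := {b.1}ᶜ) fun h => hp (Subtype.ext h), magnusHom_of]

theorem exists_spansWindow_magnusHom [DecidableEq X] {a : {x // x ≠ t}}
    {k : FreeGroup (MagnusLetter t)} (h : ¬ConjInto (window a ∅) k) :
    ∃ (D : ℕ) (r : FreeGroup (MagnusLetter t)),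
      SpansWindow a D r ∧ r.norm ≤ k.norm ∧ IsConj (magnusHom t k) (magnusHom t r) := by
  obtain ⟨m, D, r, hr, hnorm, hconj⟩ := exists_spansWindow h
  refine ⟨D, r, hr, hnorm, ((magnusHom t).map_isConj hconj).trans ?_⟩
  exact (isConj_iff.2 ⟨_, (magnusHom_levelShift m r).symm⟩).symm

theorem exists_not_conjInto_window_empty {k : FreeGroup (MagnusLetter t)} (hk : k ≠ 1) :
    ∃ a : {x // x ≠ t}, ¬ConjInto (window a ∅) k := by
  obtain ⟨p, -, hp⟩ := exists_not_conjInto_compl_singleton (mt conjInto_empty_iff.1 hk)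
  exact ⟨p.1, fun h => hp (h.mono fun q hq hqp => hq (congrArg Prod.fst hqp))⟩

end MagnusRange

section Freiheitssatz

variable {X : Type u} {t : X} {a : {x // x ≠ t}} {D : ℕ} {r : FreeGroup (MagnusLetter t)}

theorem disjoint_map_magnusHom_normalClosure (hr : SpansWindow a D r)
    (hF : SatisfiesFreiheitssatz r) {T : Set (MagnusLetter t)}
    (hT : T ⊆ window a (Set.Icc 0 D)) (hTr : ¬ConjInto T r) :
    Disjoint ((lettersSubgroup T).map (magnusHom t)) (Subgroup.normalClosure {magnusHom t r}) := by
  refine Subgroup.disjoint_def.2 ?_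
  rintro _ ⟨k, hk, rfl⟩ hkr
  have hkr' := mem_normalClosure_of_magnusHom_mem hr hF (lettersSubgroup_mono hT hk) hkr
  rw [Subgroup.disjoint_def.1 (hF T hTr) hk hkr', map_one]

theorem disjoint_compl_singleton_of_spansWindow (hr : SpansWindow a D r)
    (hF : SatisfiesFreiheitssatz r) :
    Disjoint (lettersSubgroup {a.1}ᶜ) (Subgroup.normalClosure {magnusHom t r}) := by
  have hrange : Subgroup.normalClosure {magnusHom t r} ≤ (magnusHom t).range := by
    rw [range_magnusHom]
    exact Subgroup.normalClosure_le_normal (Set.singleton_subset_iff.2 (exponentSum_magnusHom r))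
  have hmap : lettersSubgroup {a.1}ᶜ ⊓ Subgroup.normalClosure {magnusHom t r} ≤
      (lettersSubgroup (window a ∅)).map (magnusHom t) := by
    rintro _ ⟨hw, hwr⟩
    obtain ⟨k, rfl⟩ := hrange hwr
    refine ⟨letterRetraction (window a ∅) k, letterRetraction_mem _ k, ?_⟩
    rw [← letterRetraction_magnusHom, letterRetraction_eq_self hw]
  have hdisj := disjoint_map_magnusHom_normalClosure hr hF (window_mono a (Set.empty_subset _))
    fun h => hr.not_Ico (h.mono (window_mono a (Set.empty_subset _)))
  exact Subgroup.disjoint_def.2 fun hw hwr =>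
    Subgroup.disjoint_def.1 hdisj (hmap ⟨hw, hwr⟩) hwr

theorem disjoint_compl_singleton_self_of_spansWindow (hr : SpansWindow a D r)
    (hF : SatisfiesFreiheitssatz r) (ht : ¬ConjInto {t}ᶜ (magnusHom t r)) :
    Disjoint (lettersSubgroup {t}ᶜ) (Subgroup.normalClosure {magnusHom t r}) := by
  rw [← map_magnusHom_lettersSubgroup_zero (t := t)]
  refine disjoint_map_magnusHom_normalClosure hr hF (fun p hp _ => ?_) fun h => ht (h.map ?_)
  · exact ⟨(hp : p.2 = 0).ge, (hp : p.2 = 0).trans_le D.cast_nonneg⟩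
  · exact Subgroup.map_le_iff_le_comap.1 map_magnusHom_lettersSubgroup_zero.le

variable [DecidableEq X]

theorem satisfiesFreiheitssatz_magnusHom {k : FreeGroup (MagnusLetter t)}
    (hF : ∀ r : FreeGroup (MagnusLetter t), r.norm ≤ k.norm → SatisfiesFreiheitssatz r) :
    SatisfiesFreiheitssatz (magnusHom t k) := by
  refine satisfiesFreiheitssatz_of_compl_singleton fun b hb => ?_
  obtain rfl | hbt := eq_or_ne b t
  · have hk : k ≠ 1 := by
      rintro rfl
      exact hb (conjInto_of_mem (map_one (magnusHom b) ▸ one_mem _))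
    obtain ⟨a, ha⟩ := exists_not_conjInto_window_empty hk
    obtain ⟨D, r, hr, hnorm, hconj⟩ := exists_spansWindow_magnusHom ha
    rw [normalClosure_singleton_congr hconj]
    exact disjoint_compl_singleton_self_of_spansWindow hr (hF r hnorm) fun h =>
      hb (h.congr hconj.symm)
  · have hk : ¬ConjInto (window ⟨b, hbt⟩ ∅) k := fun h =>
      hb (h.map fun _ => magnusHom_mem_lettersSubgroup)
    obtain ⟨D, r, hr, hnorm, hconj⟩ := exists_spansWindow_magnusHom hk
    rw [normalClosure_singleton_congr hconj]
    exact disjoint_compl_singleton_of_spansWindow (a := ⟨b, hbt⟩) hr (hF r hnorm)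

end Freiheitssatz

section Reduction

variable {X : Type u} {a b : X} {r : FreeGroup X}

theorem disjoint_of_conjInto_singleton (h : ConjInto {b} r) :
    Disjoint (lettersSubgroup {b}ᶜ) (Subgroup.normalClosure {r}) := by
  have hker : Subgroup.normalClosure {r} ≤ (letterRetraction {b}ᶜ).ker := by
    refine Subgroup.normalClosure_le_normal (Set.singleton_subset_iff.2 ?_)
    obtain ⟨k, hk⟩ := conjInto_singleton_iff.1 h
    have hb : letterRetraction {b}ᶜ (FreeGroup.of b) = 1 :=
      letterRetraction_of_notMem fun h => h rfl
    have hconj := (letterRetraction {b}ᶜ).map_isConj hk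
    rwa [map_zpow, hb, one_zpow, isConj_one_left] at hconj
  exact Subgroup.disjoint_def.2 fun hw hwr =>
    (letterRetraction_eq_self hw).symm.trans (hker hwr)

variable [DecidableEq X]

theorem disjoint_of_disjoint_rootSubst {α β : ℤ} (hab : a ≠ b) (hβ : β ≠ 0)
    (h : Disjoint (lettersSubgroup {b}ᶜ) (Subgroup.normalClosure {rootSubst a b α β r})) :
    Disjoint (lettersSubgroup {b}ᶜ) (Subgroup.normalClosure {r}) := by
  refine Subgroup.disjoint_def.2 fun {w} hw hwr => rootSubst_injective hab hβ (α := α) ?_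
  rw [map_one]
  exact Subgroup.disjoint_def.1 h (rootSubst_mem_lettersSubgroup hab hw)
    ((rootSubst_mem_normalClosure hab hβ).2 hwr)

theorem conjInto_singleton_or_exists_magnusHom_eq (hb : ¬ConjInto {b}ᶜ r) :
    ConjInto {b} r ∨
      (∃ k : FreeGroup (MagnusLetter b), magnusHom b k = r ∧ k.norm < r.norm) ∨
      ∃ (a : X) (α β : ℤ) (k : FreeGroup (MagnusLetter a)), a ≠ b ∧ β ≠ 0 ∧
        ¬ConjInto {b}ᶜ (rootSubst a b α β r) ∧
        magnusHom a k = rootSubst a b α β r ∧ k.norm < r.norm := by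
  refine or_iff_not_imp_left.2 fun hpow => ?_
  by_cases hexp : exponentSum b r = 1
  · exact .inl <| exists_shorter_magnusHom_eq (θ := MonoidHom.id _)
      ⟨1, 1, by simp, FreeGroup.norm_one.le⟩ (fun _ => magnusLengthLE_of)
      (fun h => hb (conjInto_of_mem h)) hexp
  · obtain ⟨a, hab, ha⟩ := exists_not_conjInto_compl_singleton hpow
    have hzero : exponentSum a (rootSubst a b (exponentSum a r).toAdd (exponentSum b r).toAdd r) =
        1 := by
      rw [exponentSum_left_rootSubst hab, ← toAdd_eq_zero, toAdd_mul, toAdd_zpow, toAdd_zpow,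
        smul_eq_mul, smul_eq_mul]
      ring
    obtain ⟨k, hk, hnorm⟩ := exists_shorter_magnusHom_eq magnusLengthLE_rootSubst_of_left
      (fun _ => magnusLengthLE_rootSubst_of_ne) (fun h => ha (conjInto_of_mem h)) hzero
    refine .inr ⟨a, _, _, k, hab, mt toAdd_eq_zero.1 hexp, fun h => hexp ?_, hk, hnorm⟩
    rw [← exponentSum_right_rootSubst hab, exponentSum_eq_one_of_conjInto h]

end Reduction

theorem satisfiesFreiheitssatz {X : Type u} (r : FreeGroup X) : SatisfiesFreiheitssatz r := by
  classical
  suffices h : ∀ (n : ℕ) {Y : Type u} [DecidableEq Y] (s : FreeGroup Y), s.norm = n →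
      SatisfiesFreiheitssatz s from h _ r rfl
  intro n
  induction n using Nat.strong_induction_on with | _ n ih
  rintro Y _ r rfl
  have hlt {Z : Type u} [DecidableEq Z] {k : FreeGroup Z} (hk : k.norm < r.norm) (s : FreeGroup Z)
      (hs : s.norm ≤ k.norm) : SatisfiesFreiheitssatz s := ih _ (hs.trans_lt hk) s rfl
  refine satisfiesFreiheitssatz_of_compl_singleton fun b hb => ?_
  obtain hpow | ⟨k, hk, hnorm⟩ | ⟨a, α, β, k, hab, hβ, hroot, hk, hnorm⟩ :=
    conjInto_singleton_or_exists_magnusHom_eq hb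
  · exact disjoint_of_conjInto_singleton hpow
  · exact hk ▸ satisfiesFreiheitssatz_magnusHom (hlt hnorm) _ (hk.symm ▸ hb)
  · exact disjoint_of_disjoint_rootSubst hab hβ
      (hk ▸ satisfiesFreiheitssatz_magnusHom (hlt hnorm) _ (hk.symm ▸ hroot))

/-! ### Torsion in one-relator groups -/

section FreeProduct

open Monoid.Coprod

variable {K M : Type*} [Group K] [Group M] {X : Type*}

/-- The homomorphism to a free product of `K × M` and `ℤ` that sends the letter `x` to the
conjugate of the stable letter by `m x`. -/
def conjugatesHom (K : Type*) [Group K] (m : X → M) : Monoid.Coprod K (FreeGroup X) →*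
    HNNExtension (K × M) ⊥ ⊥ (MulEquiv.refl _) :=
  lift (HNNExtension.of.comp (MonoidHom.inl K M)) <| FreeGroup.lift fun x =>
    (HNNExtension.of (1, m x))⁻¹ * HNNExtension.t * HNNExtension.of (1, m x)

-- On `P × M` with `P` the source, `K × M` acts by translations and the stable letter by
-- `(q, m x) ↦ (x * q, m x)`, so `P` acts on `P × {1}` by translations.
theorem conjugatesHom_injective {m : X → M} (hm : Function.Injective m) :
    Function.Injective (conjugatesHom K m) := by
  let P := Monoid.Coprod K (FreeGroup X)
  let f : M → P := Function.extend m (fun x => inr (FreeGroup.of x)) 1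
  let stable : Equiv.Perm (P × M) := Equiv.prodCongrLeft fun y => Equiv.mulLeft (f y)
  let base : K × M →* Equiv.Perm (P × M) :=
    (MulAction.toPermHom (P × M) (P × M)).comp (inl.prodMap (MonoidHom.id M))
  let ρ : HNNExtension (K × M) ⊥ ⊥ (MulEquiv.refl _) →* Equiv.Perm (P × M) :=
    HNNExtension.lift base stable fun a => by
      rw [Subsingleton.elim a 1, map_one, OneMemClass.coe_one, map_one, mul_one, one_mul]
  let S : Subgroup P :=
    { carrier := {p | ∀ q, ρ (conjugatesHom K m p) (q, 1) = (p * q, 1)}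
      one_mem' := fun q => by rw [map_one, map_one, Equiv.Perm.one_apply, one_mul]
      mul_mem' := fun {p p'} hp hp' q => by
        rw [map_mul, map_mul, Equiv.Perm.mul_apply, hp', hp, mul_assoc]
      inv_mem' := fun {p} hp q => by
        rw [map_inv, map_inv, Equiv.Perm.inv_eq_iff_eq, hp, mul_inv_cancel_left] }
  have hinr (x : X) : inr (FreeGroup.of x) ∈ S := fun q => by
    have hφ : conjugatesHom K m (inr (FreeGroup.of x)) =
        (HNNExtension.of (1, m x))⁻¹ * HNNExtension.t * HNNExtension.of (1, m x) := by
      rw [conjugatesHom, lift_apply_inr, FreeGroup.lift_apply_of]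
    simp [hφ, ρ, base, stable, f, hm.extend_apply]
  have hinl (k : K) : inl k ∈ S := fun q => by
    have hφ : conjugatesHom K m (inl k) = HNNExtension.of (k, 1) := rfl
    simp [hφ, ρ, base]
  have hρ (p : P) : p ∈ S := by
    induction p using Monoid.Coprod.induction_on with
    | inl k => exact hinl k
    | inr w =>
      suffices h : (⊤ : Subgroup _) ≤ S.comap inr from h (Subgroup.mem_top w)
      rw [← FreeGroup.closure_range_of, Subgroup.closure_le]
      exact Set.range_subset_iff.2 hinr
    | mul p q hp hq => exact mul_mem hp hq
  intro p q hpq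
  simpa only [hρ _ _, mul_one, Prod.mk.injEq, and_true] using congrArg (fun e => ρ e (1, 1)) hpq

theorem hasTorsionCentralizers_coprod_freeGroup (hK : IsMulTorsion K) (X : Type*) :
    HasTorsionCentralizers (Monoid.Coprod K (FreeGroup X)) := by
  classical
  let m (x : X) : X → Multiplicative (ZMod 2) := Pi.mulSingle x (Multiplicative.ofAdd 1)
  have hm : Function.Injective m := fun x y hxy => by
    by_contra hne
    have h := congrFun hxy x
    simp [m, hne] at h
  have hKM : IsMulTorsion (K × (X → Multiplicative (ZMod 2))) := fun g =>
    (hK g.1).prod_mk <| isOfFinOrder_iff_pow_eq_one.2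
      ⟨2, two_pos, funext fun x => ZModModule.char_nsmul_eq_zero 2 (g.2 x).toAdd⟩
  refine ((HasTorsionCentralizers.of_isTorsion hKM).hnnExtension ?_ ?_).of_injective
    (conjugatesHom_injective hm)
  · exact fun a ha _ => ha
  · exact fun a ha _ => ha

end FreeProduct

theorem hasTorsionCentralizers_presentedGroup_zpow {X : Type u} (b : X) {k : ℤ} (hk : k ≠ 0) :
    HasTorsionCentralizers (PresentedGroup {FreeGroup.of b ^ k}) := by
  classical
  let K := Subgroup.zpowers (PresentedGroup.of b : PresentedGroup {FreeGroup.of b ^ k})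
  let z : K := ⟨_, Subgroup.mem_zpowers _⟩
  have hz : z ^ k = 1 := Subtype.ext (PresentedGroup.one_of_mem (Set.mem_singleton _))
  have hK : IsMulTorsion K := by
    rintro ⟨_, i, rfl⟩
    exact (isOfFinOrder_iff_zpow_eq_one.2 ⟨k, hk, hz⟩ : IsOfFinOrder z).zpow
  let f : PresentedGroup {FreeGroup.of b ^ k} →* Monoid.Coprod K (FreeGroup X) :=
    PresentedGroup.toGroup (f := fun x => if x = b then .inl z else .inr (FreeGroup.of x)) <|
      by
        rintro _ rfl
        rw [map_zpow, FreeGroup.lift_apply_of, if_pos rfl, ← map_zpow, hz, map_one]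
  let g : Monoid.Coprod K (FreeGroup X) →* PresentedGroup {FreeGroup.of b ^ k} :=
    Monoid.Coprod.lift K.subtype (PresentedGroup.mk _)
  have hgf : g.comp f = MonoidHom.id _ := PresentedGroup.ext fun x => by
    rw [MonoidHom.comp_apply, PresentedGroup.toGroup.of]
    split_ifs with hx
    · rw [hx]
      exact Monoid.Coprod.lift_apply_inl ..
    · rfl
  exact (hasTorsionCentralizers_coprod_freeGroup hK X).of_injective (f := f)
    (Function.LeftInverse.injective (DFunLike.congr_fun hgf))

theorem hasTorsionCentralizers_presentedGroup_congr {X : Type u} {r s : FreeGroup X}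
    (h : IsConj r s) (hr : HasTorsionCentralizers (PresentedGroup {s})) :
    HasTorsionCentralizers (PresentedGroup {r}) :=
  hr.of_injective (f := (QuotientGroup.quotientMulEquivOfEq
    (normalClosure_singleton_congr h)).toMonoidHom) (MulEquiv.injective _)

theorem hasTorsionCentralizers_presentedGroup_one {X : Type u} :
    HasTorsionCentralizers (PresentedGroup {(1 : FreeGroup X)}) := by
  refine .of_torsionFree fun g hg => ?_
  obtain ⟨w, rfl⟩ := PresentedGroup.mk_surjective _ g
  obtain ⟨n, hn, hw⟩ := isOfFinOrder_iff_pow_eq_one.1 hg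
  rw [← map_pow, PresentedGroup.mk_eq_one_iff] at hw
  have hpow : w ^ n ∈ (⊥ : Subgroup _) :=
    Subgroup.normalClosure_le_normal (Set.singleton_subset_iff.2 (one_mem _)) hw
  rw [(pow_eq_one_iff_left hn.ne').1 (Subgroup.mem_bot.1 hpow), map_one]

theorem hasTorsionCentralizers_presentedGroup_magnusHom {X : Type u} [DecidableEq X] {t : X}
    {k : FreeGroup (MagnusLetter t)} (hk : k ≠ 1)
    (h : ∀ r : FreeGroup (MagnusLetter t), r.norm ≤ k.norm →
      HasTorsionCentralizers (PresentedGroup {r})) :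
    HasTorsionCentralizers (PresentedGroup {magnusHom t k}) := by
  obtain ⟨a, ha⟩ := exists_not_conjInto_window_empty hk
  obtain ⟨D, r, hr, hnorm, hconj⟩ := exists_spansWindow_magnusHom ha
  exact hasTorsionCentralizers_presentedGroup_congr hconj
    ((h r hnorm).presentedGroup_magnusHom hr (satisfiesFreiheitssatz r))

theorem hasTorsionCentralizers_presentedGroup {X : Type u} (r : FreeGroup X) :
    HasTorsionCentralizers (PresentedGroup {r}) := by
  classical
  suffices h : ∀ (n : ℕ) {Y : Type u} [DecidableEq Y] (s : FreeGroup Y), s.norm = n →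
      HasTorsionCentralizers (PresentedGroup {s}) from h _ r rfl
  intro n
  induction n using Nat.strong_induction_on with | _ n ih
  rintro Y _ r rfl
  have hlt {Z : Type u} [DecidableEq Z] {k : FreeGroup Z} (hk : k.norm < r.norm) (s : FreeGroup Z)
      (hs : s.norm ≤ k.norm) : HasTorsionCentralizers (PresentedGroup {s}) :=
    ih _ (hs.trans_lt hk) s rfl
  obtain rfl | hr1 := eq_or_ne r 1
  · exact hasTorsionCentralizers_presentedGroup_one
  obtain ⟨b, -, hb⟩ := exists_not_conjInto_compl_singleton (mt conjInto_empty_iff.1 hr1)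
  obtain hpow | ⟨k, rfl, hnorm⟩ | ⟨a, α, β, k, hab, hβ, -, hk, hnorm⟩ :=
    conjInto_singleton_or_exists_magnusHom_eq hb
  · obtain ⟨k, hk⟩ := conjInto_singleton_iff.1 hpow
    refine hasTorsionCentralizers_presentedGroup_congr hk
      (hasTorsionCentralizers_presentedGroup_zpow b ?_)
    rintro rfl
    exact hr1 (isConj_one_left.1 (zpow_zero (FreeGroup.of b) ▸ hk))
  · refine hasTorsionCentralizers_presentedGroup_magnusHom ?_ (hlt hnorm)
    rintro rfl
    exact hr1 (map_one _)
  · refine .of_rootSubst hab hβ (α := α)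
      (hk ▸ hasTorsionCentralizers_presentedGroup_magnusHom ?_ (hlt hnorm))
    rintro rfl
    exact hr1 (rootSubst_injective hab hβ (by rw [← hk, map_one, map_one]))

theorem statement_2_general {X : Type u} (r : FreeGroup X) (C : Subgroup (PresentedGroup {r}))
    (hC : VirtuallyZ C) : Nonempty (C ≃* Multiplicative ℤ) ∨ Nonempty (C ≃* DihedralGroup 0) :=
  ((hasTorsionCentralizers_presentedGroup r).of_injective
    C.subtype_injective).mulEquiv_int_or_infiniteDihedral hC

/-- Karrass–Solitar, Cebotar.  A virtually-ℤ subgroup of a one-relator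
group with torsion is infinite cyclic or infinite dihedral. -/
theorem statement_2 {X : Type} [Nontrivial X] (R : FreeGroup X) (n : ℕ)
    (hn : 1 < n) (hR : ∀ (S : FreeGroup X) (k : ℕ), 1 ≤ k → R = S ^ k → k = 1)
    (C : Subgroup (PresentedGroup {R ^ n})) (hC : VirtuallyZ C) :
    Nonempty (C ≃* Multiplicative ℤ) ∨ Nonempty (C ≃* DihedralGroup 0) :=
  statement_2_general (R ^ n) C hC
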